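/- Let q > 1 be an odd squarefree integer with exactly k distinct prime factors. If the smallest prime factor of q is greater than 2^k, then the Erdős conjecture is true mod q. -/

import Mathlib

open Filter Topology Finset

/-- `f : ℕ → ℤ` is Erdősian mod `q`: periodic with period `q`, takes values `±1`
off multiples of `q`, and `0` on multiples of `q`. -/
def IsErdosian (q : ℕ) (f : ℕ → ℤ) : Prop :=
  (∀ n : ℕ, 1 ≤ n → f (n + q) = f n) ∧
  (∀ n : ℕ, 1 ≤ n → ¬ q ∣ n → f n = 1 ∨ f n = -1) ∧
  (∀ n : ℕ, 1 ≤ n → q ∣ n → f n = 0)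

/-- The Erdős conjecture is false mod `q`: there is an Erdősian function mod `q`
whose partial sums `∑_{n=1}^N f(n)/n` tend to `0`. -/
def ErdosConjectureFalse (q : ℕ) : Prop :=
  ∃ f : ℕ → ℤ, IsErdosian q f ∧
    Tendsto (fun N : ℕ => ∑ n ∈ Finset.Icc 1 N, (f n : ℝ) / n) atTop (nhds 0)

/-- The Erdős conjecture holds (is true) mod `q`. -/
def ErdosConjectureHolds (q : ℕ) : Prop := ¬ ErdosConjectureFalse q

/-!
Regard an Erdősian function mod `q` as a function `F` on `ZMod q`. If `∑ F(n)/n = 0`, then for every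
unit `u` also `∑ F(un)/n = 0`: the discrete Fourier transform turns `∑ F(n)/n` into a linear form
in logarithms of the numbers `1 - ζ`, `ζ ^ q = 1`, with coefficients in the `q`-th cyclotomic field,
and by Baker's theorem the vanishing of such a form is respected by the Galois group.

Hence `∑ g(n)/n = 0` for the projection `g` of `F` to the functions with `g(un) = χ(u) g(n)`, for
each Dirichlet character `χ`. The Dirichlet series of `g` is `L(χ, s)` times `∑ g(r) r ^ (-s)`,
where `r` runs over the integers all of whose prime factors divide `q`. Since `L(χ, s)` does not
vanish at `s = 1`, the second factor does, and summing over `χ` gives `∑ F(r)/r = 0`. But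
`F(1) = ±1`, `F(q) = 0` and `∑ 1/r = q/φ(q)`, which is impossible if `q ≤ 2 φ(q)`; and this
inequality follows from Bernoulli's when each of the `k` primes exceeds `2 ^ k`.

Baker's theorem is proved by his original argument: Siegel's lemma provides an exponential
polynomial in the logarithms that vanishes to high order at the first few integers, the Schwarz
lemma and Liouville's inequality extend its zeros to ever more integers, and too many zeros force
it to vanish identically.
-/

/-! ### A Schwarz lemma -/

section Schwarz

theorem exists_eq_prod_sub_mul_of_count_le_analyticOrderAt (M : Multiset ℂ) {g : ℂ → ℂ}
    (hg : Differentiable ℂ g) (hM : ∀ z, (M.count z : ℕ∞) ≤ analyticOrderAt g z) :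
    ∃ h : ℂ → ℂ, Differentiable ℂ h ∧ ∀ z, g z = (M.map (z - ·)).prod * h z := by
  induction M using Multiset.induction_on generalizing g with
  | empty => exact ⟨g, hg, by simp⟩
  | cons w M ih =>
    have hgw : g w = 0 := apply_eq_zero_of_analyticOrderAt_ne_zero fun h0 ↦ by
      simpa [h0] using hM w
    have hd : Differentiable ℂ (dslope g w) := by
      rw [← differentiableOn_univ, Complex.differentiableOn_dslope univ_mem]
      exact hg.differentiableOn
    have hfactor : g = (fun z ↦ z - w) * dslope g w :=
      funext fun z ↦ by simpa [hgw] using (sub_smul_dslope g w z).symm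
    have hcount (z : ℂ) : (M.count z : ℕ∞) ≤ analyticOrderAt (dslope g w) z := by
      have hz := hM z
      rw [hfactor, analyticOrderAt_mul (by fun_prop) (hd.analyticAt z)] at hz
      rcases eq_or_ne z w with rfl | hne
      · rw [analyticOrderAt_id_sub_const_self, Multiset.count_cons_self, Nat.cast_add_one,
          add_comm] at hz
        exact (ENat.add_le_add_iff_left ENat.one_ne_top).mp hz
      · rwa [analyticOrderAt_id_sub_const_of_ne hne, zero_add,
          Multiset.count_cons_of_ne hne] at hz
    obtain ⟨h, hh, hprod⟩ := ih hd hcount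
    exact ⟨h, hh, fun z ↦ by rw [hfactor, Pi.mul_apply, hprod]; simp [mul_assoc]⟩

theorem norm_multiset_prod_map {ι 𝕜 : Type*} [NormedField 𝕜] (M : Multiset ι) (f : ι → 𝕜) :
    ‖(M.map f).prod‖ = (M.map fun i ↦ ‖f i‖).prod := by
  simpa [Function.comp_def] using map_multiset_prod (normHom : 𝕜 →*₀ ℝ) (M.map f)

theorem norm_prod_sub_le_pow_card {M : Multiset ℂ} {z : ℂ} {c : ℝ} (h : ∀ w ∈ M, ‖z - w‖ ≤ c) :
    ‖(M.map (z - ·)).prod‖ ≤ c ^ M.card := by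
  rw [norm_multiset_prod_map]
  simpa using Multiset.prod_map_le_prod_map₀ (fun w ↦ ‖z - w‖) (fun _ ↦ c)
    (fun _ _ ↦ norm_nonneg _) h

theorem pow_card_le_norm_prod_sub {M : Multiset ℂ} {z : ℂ} {c : ℝ} (hc : 0 ≤ c)
    (h : ∀ w ∈ M, c ≤ ‖z - w‖) : c ^ M.card ≤ ‖(M.map (z - ·)).prod‖ := by
  rw [norm_multiset_prod_map]
  simpa using Multiset.prod_map_le_prod_map₀ (fun _ ↦ c) (fun w ↦ ‖z - w‖) (fun _ _ ↦ hc) h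

theorem norm_mul_two_pow_card_le_of_count_le_analyticOrderAt {g : ℂ → ℂ} (hg : Differentiable ℂ g)
    {M : Multiset ℂ} (hM : ∀ z, (M.count z : ℕ∞) ≤ analyticOrderAt g z) {r B : ℝ} (hr : 0 < r)
    (hMr : ∀ w ∈ M, ‖w‖ ≤ r) (hB : ∀ z, ‖z‖ = 5 * r → ‖g z‖ ≤ B) {z : ℂ} (hz : ‖z‖ ≤ r) :
    ‖g z‖ * 2 ^ M.card ≤ B := by
  obtain ⟨h, hh, hfactor⟩ := exists_eq_prod_sub_mul_of_count_le_analyticOrderAt M hg hM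
  have hsphere : ∀ y ∈ frontier (Metric.ball (0 : ℂ) (5 * r)), ‖h y‖ ≤ B / (4 * r) ^ M.card := by
    intro y hy
    rw [frontier_ball _ (by positivity), mem_sphere_zero_iff_norm] at hy
    have hprod : (4 * r) ^ M.card ≤ ‖(M.map (y - ·)).prod‖ :=
      pow_card_le_norm_prod_sub (by positivity) fun w hw ↦ by
        linarith [norm_sub_norm_le y w, hMr w hw]
    rw [le_div_iff₀' (by positivity)]
    calc (4 * r) ^ M.card * ‖h y‖ ≤ ‖(M.map (y - ·)).prod‖ * ‖h y‖ := by gcongr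
      _ = ‖g y‖ := by rw [hfactor, norm_mul]
      _ ≤ B := hB y hy
  have hhz : ‖h z‖ ≤ B / (4 * r) ^ M.card := by
    refine Complex.norm_le_of_forall_mem_frontier_norm_le Metric.isBounded_ball hh.diffContOnCl
      hsphere (subset_closure ?_)
    rw [mem_ball_zero_iff]
    linarith
  have hprod : ‖(M.map (z - ·)).prod‖ ≤ (2 * r) ^ M.card :=
    norm_prod_sub_le_pow_card fun w hw ↦ by linarith [norm_sub_le z w, hMr w hw]
  calc ‖g z‖ * 2 ^ M.card
      = ‖(M.map (z - ·)).prod‖ * ‖h z‖ * 2 ^ M.card := by rw [hfactor, norm_mul]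
    _ ≤ (2 * r) ^ M.card * (B / (4 * r) ^ M.card) * 2 ^ M.card := by gcongr
    _ = B := by
      rw [show 4 * r = 2 * r * 2 by ring, mul_pow (2 * r) 2]
      field_simp

theorem norm_natCast_mul_two_pow_le {g : ℂ → ℂ} (hg : Differentiable ℂ g) {s N N' : ℕ}
    (hN' : 0 < N') (hNN' : N ≤ N') (hzero : ∀ k < N, ∀ i < s, iteratedDeriv i g k = 0) {B : ℝ}
    (hB : ∀ z : ℂ, ‖z‖ = 5 * N' → ‖g z‖ ≤ B) {t : ℕ} (ht : t < N') :
    ‖g t‖ * 2 ^ (s * N) ≤ B := by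
  have hnodup : ((range N).val.map ((↑) : ℕ → ℂ)).Nodup :=
    (range N).nodup.map Nat.cast_injective
  have hcount (z : ℂ) : ((s • (range N).val.map ((↑) : ℕ → ℂ)).count z : ℕ∞) ≤
      analyticOrderAt g z := by
    rw [Multiset.count_nsmul]
    by_cases hz : z ∈ (range N).val.map ((↑) : ℕ → ℂ)
    · rw [Multiset.count_eq_one_of_mem hnodup hz, mul_one,
        natCast_le_analyticOrderAt_iff_iteratedDeriv_eq_zero (hg.analyticAt z)]
      obtain ⟨k, hk, rfl⟩ := Multiset.mem_map.mp hz
      exact hzero k (mem_range.mp hk)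
    · rw [Multiset.count_eq_zero_of_notMem hz, mul_zero, Nat.cast_zero]
      exact zero_le
  have hbound : ∀ w ∈ s • (range N).val.map ((↑) : ℕ → ℂ), ‖w‖ ≤ N' := by
    intro w hw
    obtain ⟨k, hk, rfl⟩ := Multiset.mem_map.mp (Multiset.mem_of_mem_nsmul hw)
    rw [Complex.norm_natCast]
    exact_mod_cast (mem_range.mp hk).le.trans hNN'
  have hcard : (s • (range N).val.map ((↑) : ℕ → ℂ)).card = s * N := by simp
  rw [← hcard]
  refine norm_mul_two_pow_card_le_of_count_le_analyticOrderAt hg hcount (by exact_mod_cast hN')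
    hbound hB ?_
  rw [Complex.norm_natCast]
  exact_mod_cast ht.le

end Schwarz

/-! ### Algebraic numbers -/

section AlgebraicNumbers

open NumberField Polynomial

variable {K : Type*} [Field K]

section

variable [NumberField K]

theorem house_le_of_forall_norm_le {x : K} {A : ℝ} (hA : 0 ≤ A) (h : ∀ φ : K →+* ℂ, ‖φ x‖ ≤ A) :
    house x ≤ A :=
  (pi_norm_le_iff_of_nonneg hA).mpr h

variable (K) in
universe u v in
theorem exists_siegel_rpow_const : ∃ c : ℝ, ∀ {α : Type u} {β : Type v} [Fintype α] [Fintype β]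
    (a : Matrix α β (𝓞 K)) (A : ℝ), a ≠ 0 → 0 < Fintype.card α →
    Fintype.card α < Fintype.card β → (∀ k l, house (a k l : K) ≤ A) →
    ∃ ξ : β → 𝓞 K, ξ ≠ 0 ∧ a.mulVec ξ = 0 ∧ ∀ l, house (ξ l : K) ≤ c * (c * Fintype.card β * A) ^
      ((Fintype.card α : ℝ) / (Fintype.card β - Fintype.card α)) := by
  classical
  exact ⟨_, fun a A ha hpos hlt hA ↦
    house.exists_ne_zero_int_vec_house_le K a ha hpos hlt rfl hA rfl⟩

theorem mul_rpow_le_of_le_one {c m y e : ℝ} (hm : 1 ≤ m) (hcm : |c| ≤ m) (hy : 1 ≤ y) (he : 0 ≤ e)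
    (he1 : e ≤ 1) : c * (c * y) ^ e ≤ m * (m * y) :=
  calc c * (c * y) ^ e ≤ |c * (c * y) ^ e| := le_abs_self _
    _ = |c| * |(c * y) ^ e| := abs_mul _ _
    _ ≤ |c| * |c * y| ^ e := by gcongr; exact Real.abs_rpow_le_abs_rpow _ _
    _ = |c| * (|c| * y) ^ e := by rw [abs_mul, abs_of_nonneg (zero_le_one.trans hy)]
    _ ≤ m * (m * y) ^ e := by gcongr
    _ ≤ m * (m * y) ^ (1 : ℝ) := by gcongr; exact one_le_mul_of_one_le_of_one_le hm hy
    _ = m * (m * y) := by rw [Real.rpow_one]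

variable (K) in
universe u v in
theorem exists_siegel_const : ∃ c : ℝ, 1 ≤ c ∧ ∀ {α : Type u} {β : Type v} [Fintype α] [Fintype β]
    (a : Matrix α β (𝓞 K)) (A : ℝ), 1 ≤ A → 0 < Fintype.card β →
    2 * Fintype.card α ≤ Fintype.card β → (∀ k l, ∀ φ : K →+* ℂ, ‖φ (a k l)‖ ≤ A) →
    ∃ ξ : β → 𝓞 K, ξ ≠ 0 ∧ a.mulVec ξ = 0 ∧
      ∀ l, ∀ φ : K →+* ℂ, ‖φ (ξ l)‖ ≤ c * (c * (Fintype.card β * A)) := by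
  obtain ⟨c, hc⟩ := exists_siegel_rpow_const K
  refine ⟨max 1 |c|, le_max_left _ _, fun {α β} _ _ a A hA hβ hcard ha ↦ ?_⟩
  have hβ1 : (1 : ℝ) ≤ Fintype.card β := by exact_mod_cast hβ
  have hβA : 1 ≤ Fintype.card β * A := one_le_mul_of_one_le_of_one_le hβ1 hA
  rcases eq_or_ne a 0 with rfl | ha0
  · have : Nonempty β := Fintype.card_pos_iff.mp hβ
    refine ⟨1, one_ne_zero, Matrix.zero_mulVec _, fun l φ ↦ ?_⟩
    simpa using one_le_mul_of_one_le_of_one_le (le_max_left 1 |c|)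
      (one_le_mul_of_one_le_of_one_le (le_max_left 1 |c|) hβA)
  have hα : 0 < Fintype.card α := Fintype.card_pos_iff.mpr <| by
    by_contra hempty
    rw [not_nonempty_iff] at hempty
    exact ha0 (Subsingleton.elim _ _)
  have hcardR : (2 : ℝ) * Fintype.card α ≤ Fintype.card β := by exact_mod_cast hcard
  have hαR : (0 : ℝ) < Fintype.card α := by exact_mod_cast hα
  obtain ⟨ξ, hξ, haξ, hbound⟩ := hc a A ha0 hα (by omega)
    fun k l ↦ house_le_of_forall_norm_le (by linarith) (ha k l)
  refine ⟨ξ, hξ, haξ, fun l φ ↦ (norm_embedding_le_house _ φ).trans ((hbound l).trans ?_)⟩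
  rw [mul_assoc c]
  refine mul_rpow_le_of_le_one (le_max_left _ _) (le_max_right _ _) hβA
    (div_nonneg hαR.le (by linarith)) ?_
  rw [div_le_one (by linarith)]
  linarith

theorem exists_natCast_mul_isIntegral (s : Finset K) :
    ∃ D : ℕ, 1 ≤ D ∧ ∀ x ∈ s, IsIntegral ℤ ((D : K) * x) := by
  obtain ⟨y, hy, hint⟩ := exists_integral_multiples ℤ ℚ s
  refine ⟨y.natAbs, Int.natAbs_pos.mpr hy, fun x hx ↦ ?_⟩
  have hyx := hint x hx
  rw [zsmul_eq_mul] at hyx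
  rcases Int.natAbs_eq y with hpos | hneg
  · rw [hpos] at hyx
    simpa using hyx
  · rw [hneg] at hyx
    simpa using hyx.neg

theorem exists_forall_norm_embedding_le (s : Finset K) :
    ∃ B : ℝ, 0 ≤ B ∧ ∀ x ∈ s, ∀ φ : K →+* ℂ, ‖φ x‖ ≤ B :=
  ⟨∑ x ∈ s, house x, sum_nonneg fun x _ ↦ house_nonneg x, fun x hx φ ↦
    (norm_embedding_le_house x φ).trans (single_le_sum (fun x _ ↦ house_nonneg x) hx)⟩

theorem one_le_norm_norm_of_isIntegral {x : K} (hx : IsIntegral ℤ x) (hx0 : x ≠ 0) :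
    1 ≤ ‖Algebra.norm ℚ x‖ := by
  obtain ⟨n, hn⟩ := IsIntegrallyClosed.isIntegral_iff.mp (Algebra.isIntegral_norm ℚ hx)
  have hn0 : n ≠ 0 := by
    rintro rfl
    exact Algebra.norm_ne_zero_iff.mpr hx0 (by rw [← hn, map_zero])
  rw [← hn, algebraMap_int_eq, eq_intCast, Int.norm_cast_rat, Int.norm_eq_abs]
  exact_mod_cast Int.one_le_abs hn0

theorem eq_zero_of_isIntegral_of_norm_mul_le {x : K} (hx : IsIntegral ℤ x) (σ : K →+* ℂ) {Z R : ℝ}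
    (hZ : ∀ φ : K →+* ℂ, ‖φ x‖ ≤ Z) (hR : 0 < R) (hσ : ‖σ x‖ * R ≤ Z)
    (hZR : Z ^ Module.finrank ℚ K < R) : x = 0 := by
  by_contra hx0
  have hZ0 : 0 ≤ Z := (norm_nonneg _).trans (hZ σ)
  have hd : Module.finrank ℚ K ≠ 0 := Module.finrank_pos.ne'
  have hLiouville : 1 ≤ ‖σ x‖ * Z ^ (Module.finrank ℚ K - 1) := by
    refine (one_le_norm_norm_of_isIntegral hx hx0).trans
      ((norm_norm_le_norm_mul_house_pow x σ).trans ?_)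
    gcongr
    · exact house_nonneg x
    · exact house_le_of_forall_norm_le hZ0 hZ
  refine hZR.not_ge ?_
  calc R ≤ R * (‖σ x‖ * Z ^ (Module.finrank ℚ K - 1)) := le_mul_of_one_le_right hR.le hLiouville
    _ = ‖σ x‖ * R * Z ^ (Module.finrank ℚ K - 1) := by ring
    _ ≤ Z * Z ^ (Module.finrank ℚ K - 1) := by gcongr
    _ = Z ^ Module.finrank ℚ K := mul_pow_sub_one hd Z

end

variable {A : Type*} [Fintype A]

theorem sum_mul_eval_mul_eval_eq_zero {p c e : A → K} {L M : ℕ}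
    (hvanish : ∀ j < L, ∀ l < M, ∑ a, p a * (c a ^ j * e a ^ l) = 0) {Q R : K[X]}
    (hQ : Q.natDegree < L) (hR : R.natDegree < M) :
    ∑ a, p a * (Q.eval (c a) * R.eval (e a)) = 0 := by
  have hexpand (a : A) : p a * (Q.eval (c a) * R.eval (e a)) =
      ∑ j ∈ range L, ∑ l ∈ range M, Q.coeff j * R.coeff l * (p a * (c a ^ j * e a ^ l)) := by
    rw [eval_eq_sum_range' hQ, eval_eq_sum_range' hR, sum_mul_sum, mul_sum]
    refine sum_congr rfl fun j _ ↦ ?_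
    rw [mul_sum]
    exact sum_congr rfl fun l _ ↦ by ring
  simp_rw [hexpand]
  rw [sum_comm]
  refine sum_eq_zero fun j hj ↦ ?_
  rw [sum_comm]
  refine sum_eq_zero fun l hl ↦ ?_
  rw [← mul_sum, hvanish j (mem_range.mp hj) l (mem_range.mp hl), mul_zero]

-- The interpolation polynomials vanish at the other values of `c` on the fibre of `e` through
-- `a₀` and at the other values of `e`, which isolates the term `a₀`.
theorem eq_zero_of_sum_pow_mul_pow_eq_zero {p c e : A → K} {L M : ℕ} (a₀ : A)
    (hc : Set.InjOn c {a | e a = e a₀}) (hL : Set.ncard {a | e a = e a₀} ≤ L)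
    (hM : Fintype.card A ≤ M)
    (hvanish : ∀ j < L, ∀ l < M, ∑ a, p a * (c a ^ j * e a ^ l) = 0) : p a₀ = 0 := by
  classical
  have hfibre : (univ.filter fun a ↦ e a = e a₀).card ≤ L := by
    simpa [Set.ncard_eq_toFinset_card'] using hL
  set Q : K[X] := ∏ a ∈ (univ.filter fun a ↦ e a = e a₀).erase a₀, (X - C (c a)) with hQ
  set R : K[X] := ∏ y ∈ (univ.image e).erase (e a₀), (X - C y) with hR
  have hQdeg : Q.natDegree < L := by
    rw [hQ, natDegree_finsetProd_X_sub_C_eq_card]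
    exact (card_erase_lt_of_mem (by simp)).trans_le hfibre
  have hRdeg : R.natDegree < M := by
    rw [hR, natDegree_finsetProd_X_sub_C_eq_card]
    exact (card_erase_lt_of_mem (by simp)).trans_le (card_image_le.trans hM)
  have hother (a : A) (ha : a ≠ a₀) : Q.eval (c a) * R.eval (e a) = 0 := by
    rw [hQ, hR, eval_prod, eval_prod]
    by_cases hea : e a = e a₀
    · rw [prod_eq_zero (i := a) (by simp [ha, hea]) (by simp), zero_mul]
    · rw [prod_eq_zero (s := (univ.image e).erase (e a₀)) (i := e a) (by simp [hea]) (by simp),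
        mul_zero]
  have hQ₀ : Q.eval (c a₀) ≠ 0 := by
    rw [hQ, eval_prod, prod_ne_zero_iff]
    intro a ha
    obtain ⟨hne, hea⟩ : a ≠ a₀ ∧ e a = e a₀ := by simpa using ha
    simpa [sub_eq_zero] using fun h ↦ hne (hc hea rfl h.symm)
  have hR₀ : R.eval (e a₀) ≠ 0 := by
    rw [hR, eval_prod, prod_ne_zero_iff]
    intro y hy
    simpa [sub_eq_zero] using (ne_of_mem_erase hy).symm
  have hsum := sum_mul_eval_mul_eval_eq_zero hvanish hQdeg hRdeg
  rw [Fintype.sum_eq_single a₀ fun a ha ↦ by rw [hother a ha, mul_zero]] at hsum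
  exact (mul_eq_zero.mp hsum).resolve_right (mul_ne_zero hQ₀ hR₀)

end AlgebraicNumbers

/-! ### Baker's theorem -/

/-- Logarithms `lam j` of elements `α j` of a field `K` embedded in `ℂ` by `σ`, one of which,
`lam none`, is the `K`-linear combination of the others with coefficients `β`. Baker's theorem
says that such a family is linearly dependent over `ℚ`. -/
structure LogRelation (K ι : Type*) [Field K] [Fintype ι] where
  σ : K →+* ℂ
  lam : Option ι → ℂ
  α : Option ι → K
  β : ι → K
  exp_lam : ∀ j, Complex.exp (lam j) = σ (α j)
  lam_none : lam none = ∑ i, σ (β i) * lam (some i)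

namespace LogRelation

variable {K ι : Type*} [Field K] [Fintype ι] (R : LogRelation K ι) {L : ℕ}

/-- The exponent `∑ j, a j * lam j` of the exponential monomial with index `a`. -/
noncomputable def freq (a : Option ι → Fin L) : ℂ := ∑ j, ((a j : ℕ) : ℂ) * R.lam j

/-- The coefficient of `lam (some i)` in `freq a` once `lam none` is eliminated. -/
def partialFreq (a : Option ι → Fin L) (i : ι) : K := (a (some i) : ℕ) + (a none : ℕ) * R.β i

/-- The number `exp (freq a)`, as an element of `K`. -/
def base (a : Option ι → Fin L) : K := ∏ j, R.α j ^ (a j : ℕ)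

/-- The factor by which the mixed partial derivative of order `τ`, in the variables
`lam (some i)`, multiplies the exponential monomial with index `a`. -/
def weight (τ : ι → ℕ) (a : Option ι → Fin L) : K := ∏ i, R.partialFreq a i ^ τ i

/-- The value at `t : ℕ` of `auxFun p τ`, as an element of `K`. -/
def value [DecidableEq ι] (p : (Option ι → Fin L) → K) (τ : ι → ℕ) (t : ℕ) : K :=
  ∑ a, p a * (R.weight τ a * R.base a ^ t)

/-- Baker's auxiliary function: the restriction to a line of the mixed partial derivative of
order `τ` of the exponential polynomial with coefficients `p`. -/
noncomputable def auxFun [DecidableEq ι] (p : (Option ι → Fin L) → K) (τ : ι → ℕ) (z : ℂ) : ℂ :=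
  ∑ a, R.σ (p a * R.weight τ a) * Complex.exp (R.freq a * z)

theorem freq_eq_sum_partialFreq (a : Option ι → Fin L) :
    R.freq a = ∑ i, R.σ (R.partialFreq a i) * R.lam (some i) := by
  rw [freq, Fintype.sum_option, R.lam_none, mul_sum, ← sum_add_distrib]
  refine sum_congr rfl fun i _ ↦ ?_
  rw [partialFreq, map_add, map_mul, map_natCast, map_natCast]
  ring

theorem exp_freq (a : Option ι → Fin L) : Complex.exp (R.freq a) = R.σ (R.base a) := by
  simp only [freq, base, Complex.exp_sum, Complex.exp_nat_mul, R.exp_lam, map_prod, map_pow]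

theorem auxFun_natCast [DecidableEq ι] (p : (Option ι → Fin L) → K) (τ : ι → ℕ) (t : ℕ) :
    R.auxFun p τ t = R.σ (R.value p τ t) := by
  simp only [auxFun, value, map_sum, mul_comm (R.freq _), Complex.exp_nat_mul, exp_freq]
  simp only [map_mul, map_pow, mul_assoc]

theorem differentiable_auxFun [DecidableEq ι] (p : (Option ι → Fin L) → K) (τ : ι → ℕ) :
    Differentiable ℂ (R.auxFun p τ) := by
  unfold auxFun
  fun_prop

theorem weight_add_single [DecidableEq ι] (τ : ι → ℕ) (i : ι) (a : Option ι → Fin L) :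
    R.weight (τ + Pi.single i 1) a = R.weight τ a * R.partialFreq a i := by
  simp only [weight, Pi.add_apply, pow_add, prod_mul_distrib]
  rw [Fintype.prod_eq_single (f := fun j ↦ R.partialFreq a j ^ (Pi.single i 1 : ι → ℕ) j) i
    fun j hj ↦ by simp [hj]]
  simp

theorem deriv_auxFun [DecidableEq ι] (p : (Option ι → Fin L) → K) (τ : ι → ℕ) :
    deriv (R.auxFun p τ) = fun z ↦ ∑ i, R.lam (some i) * R.auxFun p (τ + Pi.single i 1) z := by
  ext z
  have hderiv : HasDerivAt (R.auxFun p τ)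
      (∑ a, R.σ (p a * R.weight τ a) * (Complex.exp (R.freq a * z) * (R.freq a * 1))) z := by
    unfold auxFun
    refine HasDerivAt.fun_sum fun a _ ↦ ?_
    exact (((hasDerivAt_id z).const_mul _).cexp).const_mul _
  rw [hderiv.deriv]
  simp only [auxFun, mul_sum]
  rw [sum_comm]
  refine sum_congr rfl fun a _ ↦ ?_
  have hfactor (i : ι) : R.lam (some i) *
      (R.σ (p a * R.weight (τ + Pi.single i 1) a) * Complex.exp (R.freq a * z)) =
      R.σ (p a * R.weight τ a) * Complex.exp (R.freq a * z) *
        (R.σ (R.partialFreq a i) * R.lam (some i)) := by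
    rw [weight_add_single]
    simp only [map_mul]
    ring
  simp only [hfactor, ← mul_sum, ← freq_eq_sum_partialFreq]
  ring

theorem iteratedDeriv_auxFun_eq_zero [DecidableEq ι] (p : (Option ι → Fin L) → K) {S : ℕ} {z : ℂ}
    (hzero : ∀ τ : ι → ℕ, ∑ i, τ i < S → R.auxFun p τ z = 0) (k : ℕ) (τ : ι → ℕ)
    (hτ : ∑ i, τ i + k < S) : iteratedDeriv k (R.auxFun p τ) z = 0 := by
  induction k generalizing τ with
  | zero => simpa using hzero τ hτ
  | succ k ih =>
    have hsmooth (i : ι) :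
        ContDiffAt ℂ k (fun z ↦ R.lam (some i) * R.auxFun p (τ + Pi.single i 1) z) z :=
      contDiffAt_const.mul (R.differentiable_auxFun p _).contDiff.contDiffAt
    rw [iteratedDeriv_succ', deriv_auxFun, iteratedDeriv_fun_sum fun i _ ↦ hsmooth i]
    refine sum_eq_zero fun i _ ↦ ?_
    rw [iteratedDeriv_const_mul_field, ih, mul_zero]
    simp only [Pi.add_apply, sum_add_distrib, Fintype.sum_pi_single']
    omega

theorem norm_freq_le (a : Option ι → Fin L) : ‖R.freq a‖ ≤ L * ∑ j, ‖R.lam j‖ := by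
  rw [freq, mul_sum]
  refine norm_sum_le_of_le _ fun j _ ↦ ?_
  rw [norm_mul, Complex.norm_natCast]
  gcongr
  exact (a j).isLt.le

/-- A common denominator `D` and a bound `B` for the conjugates of the algebraic numbers in `R`.
The coefficients `β` are bounded together with a summand `1`, so that `L * B` bounds the
conjugates of `partialFreq a i`. -/
structure HeightBound (D : ℕ) (B : ℝ) : Prop where
  one_le_denom : 1 ≤ D
  one_le_bound : 1 ≤ B
  isIntegral_α : ∀ j, IsIntegral ℤ ((D : K) * R.α j)
  isIntegral_β : ∀ i, IsIntegral ℤ ((D : K) * R.β i)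
  norm_α_le : ∀ (φ : K →+* ℂ) (j : Option ι), ‖φ (R.α j)‖ ≤ B
  one_add_norm_β_le : ∀ (φ : K →+* ℂ) (i : ι), 1 + ‖φ (R.β i)‖ ≤ B

theorem exists_heightBound [NumberField K] : ∃ (D : ℕ) (B : ℝ), R.HeightBound D B := by
  classical
  obtain ⟨D, hD, hint⟩ := exists_natCast_mul_isIntegral (univ.image R.α ∪ univ.image R.β)
  obtain ⟨B, hB, hnorm⟩ := exists_forall_norm_embedding_le (univ.image R.α ∪ univ.image R.β)
  exact ⟨D, 1 + B, hD, by linarith, fun j ↦ hint _ (by simp), fun i ↦ hint _ (by simp),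
    fun φ j ↦ by linarith [hnorm (R.α j) (by simp) φ],
    fun φ i ↦ by linarith [hnorm (R.β i) (by simp) φ]⟩

variable {R} {D : ℕ} {B : ℝ}

namespace HeightBound

theorem isIntegral_mul_partialFreq (hR : R.HeightBound D B) (a : Option ι → Fin L) (i : ι) :
    IsIntegral ℤ (D * R.partialFreq a i) := by
  rw [partialFreq, mul_add, mul_left_comm]
  exact ((isIntegral_natCast _).mul (isIntegral_natCast _)).add
    ((isIntegral_natCast _).mul (hR.isIntegral_β i))

theorem isIntegral_pow_mul_base (hR : R.HeightBound D B) (a : Option ι → Fin L) :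
    IsIntegral ℤ (D ^ ((Fintype.card ι + 1) * L) * R.base a) := by
  have hprod : (D : K) ^ ((Fintype.card ι + 1) * L) * R.base a =
      ∏ j, (D : K) ^ (L - a j) * (D * R.α j) ^ (a j : ℕ) := by
    have hfactor (j : Option ι) :
        (D : K) ^ (L - a j) * (D * R.α j) ^ (a j : ℕ) = (D : K) ^ L * R.α j ^ (a j : ℕ) := by
      rw [mul_pow, ← mul_assoc, ← pow_add, Nat.sub_add_cancel (a j).isLt.le]
    simp only [hfactor, prod_mul_distrib, base, prod_const, card_univ, Fintype.card_option]
    rw [← pow_mul, mul_comm L]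
  rw [hprod]
  exact IsIntegral.prod _ fun j _ ↦
    ((isIntegral_natCast D).pow _).mul ((hR.isIntegral_α j).pow _)

theorem isIntegral_pow_mul_term (hR : R.HeightBound D B) (τ : ι → ℕ) (t : ℕ)
    (a : Option ι → Fin L) :
    IsIntegral ℤ (D ^ (∑ i, τ i + (Fintype.card ι + 1) * L * t) *
      (R.weight τ a * R.base a ^ t)) := by
  have hsplit : (D : K) ^ (∑ i, τ i + (Fintype.card ι + 1) * L * t) *
      (R.weight τ a * R.base a ^ t) = (∏ i, (D * R.partialFreq a i) ^ τ i) *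
        (D ^ ((Fintype.card ι + 1) * L) * R.base a) ^ t := by
    simp only [weight, mul_pow, prod_mul_distrib, prod_pow_eq_pow_sum, pow_add, pow_mul]
    ring
  rw [hsplit]
  exact (IsIntegral.prod _ fun i _ ↦ (hR.isIntegral_mul_partialFreq a i).pow _).mul
    ((hR.isIntegral_pow_mul_base a).pow _)

theorem isIntegral_pow_mul_value [DecidableEq ι] (hR : R.HeightBound D B)
    {p : (Option ι → Fin L) → K} (hp : ∀ a, IsIntegral ℤ (p a)) (τ : ι → ℕ) (t : ℕ) :
    IsIntegral ℤ (D ^ (∑ i, τ i + (Fintype.card ι + 1) * L * t) * R.value p τ t) := by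
  rw [value, mul_sum]
  refine IsIntegral.sum _ fun a _ ↦ ?_
  rw [mul_left_comm]
  exact (hp a).mul (hR.isIntegral_pow_mul_term τ t a)

theorem norm_partialFreq_le (hR : R.HeightBound D B) (φ : K →+* ℂ) (a : Option ι → Fin L) (i : ι) :
    ‖φ (R.partialFreq a i)‖ ≤ L * B := by
  have hlt (j : Option ι) : (a j : ℕ) ≤ L := (a j).isLt.le
  calc ‖φ (R.partialFreq a i)‖
      ≤ ‖((a (some i) : ℕ) : ℂ)‖ + ‖((a none : ℕ) : ℂ) * φ (R.β i)‖ := by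
        simpa only [partialFreq, map_add, map_mul, map_natCast] using norm_add_le _ _
    _ = (a (some i) : ℕ) + (a none : ℕ) * ‖φ (R.β i)‖ := by simp
    _ ≤ L + L * ‖φ (R.β i)‖ := by gcongr <;> exact hlt _
    _ = L * (1 + ‖φ (R.β i)‖) := by ring
    _ ≤ L * B := by gcongr; exact hR.one_add_norm_β_le φ i

theorem norm_weight_le (hR : R.HeightBound D B) (φ : K →+* ℂ) (τ : ι → ℕ) (a : Option ι → Fin L) :
    ‖φ (R.weight τ a)‖ ≤ (L * B) ^ ∑ i, τ i := by
  rw [weight, map_prod, norm_prod, ← prod_pow_eq_pow_sum]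
  gcongr with i
  rw [map_pow, norm_pow]
  gcongr
  exact hR.norm_partialFreq_le φ a i

theorem norm_base_le (hR : R.HeightBound D B) (φ : K →+* ℂ) (a : Option ι → Fin L) :
    ‖φ (R.base a)‖ ≤ B ^ ((Fintype.card ι + 1) * L) := by
  rw [base, map_prod, norm_prod]
  calc ∏ j, ‖φ (R.α j ^ (a j : ℕ))‖ ≤ ∏ _j : Option ι, B ^ L := by
        gcongr with j
        rw [map_pow, norm_pow]
        exact (pow_le_pow_left₀ (norm_nonneg _) (hR.norm_α_le φ j) _).trans
          (pow_le_pow_right₀ hR.one_le_bound (a j).isLt.le)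
    _ = B ^ ((Fintype.card ι + 1) * L) := by
        rw [prod_const, card_univ, Fintype.card_option, ← pow_mul, mul_comm]

theorem norm_term_le (hR : R.HeightBound D B) (φ : K →+* ℂ) (τ : ι → ℕ) (t : ℕ)
    (a : Option ι → Fin L) : ‖φ (R.weight τ a * R.base a ^ t)‖ ≤
      (L * B) ^ (∑ i, τ i) * B ^ ((Fintype.card ι + 1) * L * t) := by
  have hB := zero_le_one.trans hR.one_le_bound
  rw [map_mul, map_pow, norm_mul, norm_pow, pow_mul B]
  gcongr
  · exact hR.norm_weight_le φ τ a
  · exact hR.norm_base_le φ a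

theorem norm_value_le [DecidableEq ι] (hR : R.HeightBound D B) {p : (Option ι → Fin L) → K}
    {P : ℝ} {φ : K →+* ℂ} (hP : ∀ a, ‖φ (p a)‖ ≤ P) (τ : ι → ℕ) (t : ℕ) :
    ‖φ (R.value p τ t)‖ ≤ L ^ (Fintype.card ι + 1) *
      (P * ((L * B) ^ (∑ i, τ i) * B ^ ((Fintype.card ι + 1) * L * t))) := by
  rw [value, map_sum]
  refine (norm_sum_le_of_le univ fun a _ ↦ ?_).trans_eq (b :=
    ∑ _a : Option ι → Fin L, P * ((L * B) ^ (∑ i, τ i) * B ^ ((Fintype.card ι + 1) * L * t))) ?_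
  · rw [map_mul, norm_mul]
    gcongr
    · exact (norm_nonneg _).trans (hP a)
    · exact hP a
    · exact hR.norm_term_le φ τ t a
  · simp

theorem norm_auxFun_le [DecidableEq ι] (hR : R.HeightBound D B) {p : (Option ι → Fin L) → K} {P : ℝ}
    (hP : ∀ a, ‖R.σ (p a)‖ ≤ P) (τ : ι → ℕ) (z : ℂ) :
    ‖R.auxFun p τ z‖ ≤ L ^ (Fintype.card ι + 1) *
      (P * ((L * B) ^ (∑ i, τ i) * Real.exp (L * (∑ j, ‖R.lam j‖) * ‖z‖))) := by
  have hB := zero_le_one.trans hR.one_le_bound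
  rw [auxFun]
  refine (norm_sum_le_of_le univ fun a _ ↦ ?_).trans_eq (b := ∑ _a : Option ι → Fin L,
    P * ((L * B) ^ (∑ i, τ i) * Real.exp (L * (∑ j, ‖R.lam j‖) * ‖z‖))) ?_
  · rw [map_mul, norm_mul, norm_mul, mul_assoc, Complex.norm_exp]
    have hexp : (R.freq a * z).re ≤ L * (∑ j, ‖R.lam j‖) * ‖z‖ := by
      refine (Complex.re_le_norm _).trans ?_
      rw [norm_mul]
      gcongr
      exact R.norm_freq_le a
    gcongr
    · exact (norm_nonneg _).trans (hP a)
    · exact hP a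
    · exact hR.norm_weight_le R.σ τ a
  · simp

end HeightBound

section ZeroEstimate

theorem smul_eq_smul_of_sum_eq_mul {κ : Type*} [Fintype κ] {lam : κ → ℂ}
    (hli : LinearIndependent ℤ lam) {v w : κ → ℤ} {k l : ℤ} {ω : ℂ}
    (hv : ∑ j, (v j : ℂ) * lam j = k * ω) (hw : ∑ j, (w j : ℂ) * lam j = l * ω) :
    l • v = k • w := by
  have hsum : ∑ j, (l • v - k • w) j • lam j = 0 := by
    have hsplit (j : κ) : (l • v - k • w) j • lam j = l * (v j * lam j) - k * (w j * lam j) := by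
      rw [Pi.sub_apply, Pi.smul_apply, Pi.smul_apply, zsmul_eq_mul]
      push_cast [smul_eq_mul]
      ring
    rw [sum_congr rfl fun j _ ↦ hsplit j, sum_sub_distrib, ← mul_sum, ← mul_sum, hv, hw]
    ring
  exact sub_eq_zero.mp (funext (Fintype.linearIndependent_iff.mp hli _ hsum))

theorem eq_of_freq_eq (hli : LinearIndependent ℤ R.lam) {a b : Option ι → Fin L}
    (h : R.freq a = R.freq b) : a = b := by
  have hcast := smul_eq_smul_of_sum_eq_mul hli (v := fun j ↦ (a j : ℕ)) (w := fun j ↦ (b j : ℕ))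
    (k := 1) (l := 1) (ω := R.freq b) (by simpa [freq] using h) (by simp [freq])
  funext j
  exact Fin.ext (by simpa using congrFun hcast j)

-- If `base` identifies two indices, then `freq` separates them by a multiple of `2πi`; by linear
-- independence all such differences of indices lie on one line.
theorem injOn_fibre_base (hli : LinearIndependent ℤ R.lam) {M : Type*} [AddCommGroup M]
    [Module.IsTorsionFree ℤ M] (G : (Option ι → ℤ) →ₗ[ℤ] M) {a₀ a₁ : Option ι → Fin L}
    (hbase : R.base a₁ = R.base a₀) (hG : G (fun j ↦ (a₁ j : ℕ)) ≠ G (fun j ↦ (a₀ j : ℕ))) :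
    Set.InjOn (fun a : Option ι → Fin L ↦ G (fun j ↦ (a j : ℕ))) {a | R.base a = R.base a₀} := by
  have hperiod {a b : Option ι → Fin L} (hab : R.base a = R.base b) :
      ∃ k : ℤ, R.freq a = R.freq b + k * (2 * Real.pi * Complex.I) :=
    Complex.exp_eq_exp_iff_exists_int.mp (by rw [exp_freq, exp_freq, hab])
  have hdiff {a b : Option ι → Fin L} {k : ℤ}
      (h : R.freq a = R.freq b + k * (2 * Real.pi * Complex.I)) :
      ∑ j, ((((a j : ℕ) : ℤ) - ((b j : ℕ) : ℤ) : ℤ) : ℂ) * R.lam j =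
        k * (2 * Real.pi * Complex.I) := by
    rw [← sub_eq_iff_eq_add'.mpr h, freq, freq, ← sum_sub_distrib]
    exact sum_congr rfl fun j _ ↦ by push_cast; ring
  obtain ⟨l, hl⟩ := hperiod hbase
  intro a ha b hb hab
  obtain ⟨k, hk⟩ := hperiod (ha.trans hb.symm)
  have hline := congrArg G (smul_eq_smul_of_sum_eq_mul hli (hdiff hk) (hdiff hl))
  have hkG : k • (G (fun j ↦ (a₁ j : ℕ)) - G (fun j ↦ (a₀ j : ℕ))) = 0 := by
    rw [← map_sub, ← map_smul]
    refine hline.symm.trans ?_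
    rw [map_smul]
    refine smul_eq_zero_of_right _ ?_
    exact (map_sub G _ _).trans (sub_eq_zero.mpr hab)
  have hk0 : k = 0 := (smul_eq_zero.mp hkG).resolve_right (sub_ne_zero.mpr hG)
  exact eq_of_freq_eq hli (by simpa [hk0] using hk)

theorem ncard_fibre_base_le (hli : LinearIndependent ℤ R.lam) (a₀ : Option ι → Fin L) :
    Set.ncard {a : Option ι → Fin L | R.base a = R.base a₀} ≤ L := by
  by_cases hsub : ∃ a₁, R.base a₁ = R.base a₀ ∧ a₁ ≠ a₀
  · obtain ⟨a₁, hbase, hne⟩ := hsub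
    obtain ⟨j, hj⟩ := Function.ne_iff.mp hne
    have hinj := injOn_fibre_base hli (LinearMap.proj j) hbase
      (by simpa [Fin.val_inj] using hj)
    have hle := Set.ncard_le_ncard_of_injOn (s := {a | R.base a = R.base a₀}) (t := Set.univ)
      (fun a : Option ι → Fin L ↦ a j) (fun _ _ ↦ Set.mem_univ _)
      (fun a ha b hb hab ↦ hinj ha hb (by simpa [Fin.val_inj] using hab)) Set.finite_univ
    simpa [Set.ncard_univ] using hle
  · push Not at hsub
    calc Set.ncard {a : Option ι → Fin L | R.base a = R.base a₀} ≤ Set.ncard {a₀} :=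
          Set.ncard_le_ncard hsub (Set.finite_singleton a₀)
      _ = 1 := Set.ncard_singleton a₀
      _ ≤ L := (a₀ none).pos

theorem exists_injOn_partialFreq (hli : LinearIndependent ℤ R.lam) (a₀ : Option ι → Fin L) :
    ∃ i, Set.InjOn (fun a : Option ι → Fin L ↦ R.partialFreq a i) {a | R.base a = R.base a₀} := by
  have : CharZero K := R.σ.charZero
  by_cases hsub : ∃ a₁, R.base a₁ = R.base a₀ ∧ a₁ ≠ a₀
  · obtain ⟨a₁, hbase, hne⟩ := hsub
    obtain ⟨i, hi⟩ : ∃ i, R.partialFreq a₁ i ≠ R.partialFreq a₀ i := by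
      by_contra! hall
      exact hne (eq_of_freq_eq hli (by simp only [freq_eq_sum_partialFreq, hall]))
    let G : (Option ι → ℤ) →ₗ[ℤ] K :=
      (Algebra.linearMap ℤ K).comp (LinearMap.proj (some i)) +
        (LinearMap.mulRight ℤ (R.β i)).comp ((Algebra.linearMap ℤ K).comp (LinearMap.proj none))
    have hG (a : Option ι → Fin L) : G (fun j ↦ (a j : ℕ)) = R.partialFreq a i := by
      simp [G, partialFreq]
    refine ⟨i, ?_⟩
    simpa only [hG] using injOn_fibre_base hli G hbase (by rwa [hG, hG])
  · push Not at hsub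
    have : Nonempty ι := by
      by_contra hempty
      rw [not_nonempty_iff] at hempty
      exact hli.ne_zero none (by simp [R.lam_none])
    exact ⟨Classical.arbitrary ι, fun a ha b hb _ ↦ (hsub a ha).trans (hsub b hb).symm⟩

theorem eq_zero_of_forall_value_eq_zero [DecidableEq ι] (hli : LinearIndependent ℤ R.lam)
    {p : (Option ι → Fin L) → K}
    (hzero : ∀ τ : ι → ℕ, ∑ i, τ i < L → ∀ t < L ^ (Fintype.card ι + 1), R.value p τ t = 0) :
    p = 0 := by
  funext a₀
  obtain ⟨i, hi⟩ := exists_injOn_partialFreq hli a₀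
  refine eq_zero_of_sum_pow_mul_pow_eq_zero a₀ hi (ncard_fibre_base_le hli a₀)
    (M := L ^ (Fintype.card ι + 1)) (by simp) fun j hj t ht ↦ ?_
  rw [← hzero (Pi.single i j) (by simpa using hj) t ht, value]
  refine sum_congr rfl fun a _ ↦ ?_
  rw [weight, Fintype.prod_eq_single i fun i' hi' ↦ by simp [hi']]
  simp

end ZeroEstimate

section Extrapolation

/-- A bound, once denominators are cleared, both for the conjugates of `value p τ t` with
`∑ τ ≤ T` and `t ≤ N`, and for `auxFun p τ` on the circle of radius `5 * N`; here `P` bounds the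
conjugates of the coefficients `p`. -/
noncomputable def sizeBound (R : LogRelation K ι) (L D : ℕ) (B P : ℝ) (T N : ℕ) : ℝ :=
  L ^ (Fintype.card ι + 1) * (P * ((D * (L * B)) ^ T *
    ((D * B) ^ ((Fintype.card ι + 1) * L * N) * Real.exp (L * (∑ j, ‖R.lam j‖) * (5 * N)))))

namespace HeightBound

theorem pow_mul_le_sizeBound (hR : R.HeightBound D B) (hL : 0 < L) {P E : ℝ} (hP : 0 ≤ P)
    {s m T N : ℕ} (hs : s ≤ T) (hm : m ≤ (Fintype.card ι + 1) * L * N)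
    (hE : E ≤ B ^ ((Fintype.card ι + 1) * L * N) * Real.exp (L * (∑ j, ‖R.lam j‖) * (5 * N))) :
    (D : ℝ) ^ (s + m) * (L ^ (Fintype.card ι + 1) * (P * ((L * B) ^ s * E))) ≤
      R.sizeBound L D B P T N := by
  have hB := zero_le_one.trans hR.one_le_bound
  have hD : (1 : ℝ) ≤ D := by exact_mod_cast hR.one_le_denom
  have hDLB : 1 ≤ D * (L * B) := one_le_mul_of_one_le_of_one_le hD
    (one_le_mul_of_one_le_of_one_le (by exact_mod_cast hL) hR.one_le_bound)
  calc (D : ℝ) ^ (s + m) * (L ^ (Fintype.card ι + 1) * (P * ((L * B) ^ s * E)))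
      = L ^ (Fintype.card ι + 1) * (P * ((D * (L * B)) ^ s * (D ^ m * E))) := by
        rw [mul_pow (D : ℝ), pow_add]
        ring
    _ ≤ L ^ (Fintype.card ι + 1) * (P * ((D * (L * B)) ^ s * (D ^ ((Fintype.card ι + 1) * L * N) *
          (B ^ ((Fintype.card ι + 1) * L * N) *
            Real.exp (L * (∑ j, ‖R.lam j‖) * (5 * N)))))) := by
        have hDm : (D : ℝ) ^ m ≤ D ^ ((Fintype.card ι + 1) * L * N) := pow_le_pow_right₀ hD hm
        gcongr _ * (_ * (_ * ?_))
        exact (mul_le_mul_of_nonneg_left hE (by positivity)).trans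
          (mul_le_mul_of_nonneg_right hDm (by positivity))
    _ = L ^ (Fintype.card ι + 1) * (P * ((D * (L * B)) ^ s *
          ((D * B) ^ ((Fintype.card ι + 1) * L * N) *
            Real.exp (L * (∑ j, ‖R.lam j‖) * (5 * N))))) := by
        rw [mul_pow (D : ℝ) B, mul_assoc (D ^ _ : ℝ)]
    _ ≤ R.sizeBound L D B P T N := by
        rw [sizeBound]
        gcongr

theorem norm_pow_mul_value_le [DecidableEq ι] (hR : R.HeightBound D B) (hL : 0 < L)
    {p : (Option ι → Fin L) → K} {P : ℝ} {φ : K →+* ℂ} (hp : ∀ a, ‖φ (p a)‖ ≤ P) {τ : ι → ℕ}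
    {T N t : ℕ} (hτ : ∑ i, τ i ≤ T) (ht : t ≤ N) :
    ‖φ (D ^ (∑ i, τ i + (Fintype.card ι + 1) * L * t) * R.value p τ t)‖ ≤
      R.sizeBound L D B P T N := by
  have hP : 0 ≤ P := (norm_nonneg _).trans (hp fun _ ↦ ⟨0, hL⟩)
  rw [map_mul, norm_mul, map_pow, map_natCast, norm_pow, Complex.norm_natCast]
  refine (mul_le_mul_of_nonneg_left (hR.norm_value_le hp τ t) (by positivity)).trans
    (hR.pow_mul_le_sizeBound hL hP hτ (Nat.mul_le_mul_left _ ht) ?_)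
  calc B ^ ((Fintype.card ι + 1) * L * t) ≤ B ^ ((Fintype.card ι + 1) * L * N) :=
        pow_le_pow_right₀ hR.one_le_bound (Nat.mul_le_mul_left _ ht)
    _ ≤ _ := le_mul_of_one_le_right (pow_nonneg (zero_le_one.trans hR.one_le_bound) _)
        (Real.one_le_exp (by positivity))

theorem pow_mul_norm_auxFun_le [DecidableEq ι] (hR : R.HeightBound D B) (hL : 0 < L)
    {p : (Option ι → Fin L) → K} {P : ℝ} (hp : ∀ a, ‖R.σ (p a)‖ ≤ P) {τ : ι → ℕ}
    {T N t : ℕ} (hτ : ∑ i, τ i ≤ T) (ht : t ≤ N) {z : ℂ} (hz : ‖z‖ = 5 * N) :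
    (D : ℝ) ^ (∑ i, τ i + (Fintype.card ι + 1) * L * t) * ‖R.auxFun p τ z‖ ≤
      R.sizeBound L D B P T N := by
  have hP : 0 ≤ P := (norm_nonneg _).trans (hp fun _ ↦ ⟨0, hL⟩)
  refine (mul_le_mul_of_nonneg_left (hR.norm_auxFun_le hp τ z) (by positivity)).trans
    (hR.pow_mul_le_sizeBound hL hP hτ (Nat.mul_le_mul_left _ ht) ?_)
  rw [hz]
  exact le_mul_of_one_le_left (Real.exp_nonneg _) (one_le_pow₀ hR.one_le_bound)

-- The Schwarz lemma makes the algebraic integer `D ^ m * value p τ t` tiny at `σ`, while all its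
-- conjugates are at most `sizeBound`, so its norm is less than `1`.
theorem value_eq_zero_of_sizeBound_pow_lt [NumberField K] [DecidableEq ι] (hR : R.HeightBound D B)
    (hL : 0 < L) {p : (Option ι → Fin L) → K} {P : ℝ} (hint : ∀ a, IsIntegral ℤ (p a))
    (hp : ∀ (φ : K →+* ℂ) a, ‖φ (p a)‖ ≤ P) {S W T N N' : ℕ} (hST : S ≤ T) (hN' : 0 < N')
    (hNN' : N ≤ N')
    (hsize : R.sizeBound L D B P T N' ^ Module.finrank ℚ K < 2 ^ (W * N))
    (hzero : ∀ τ : ι → ℕ, ∑ i, τ i < S + W → ∀ t < N, R.value p τ t = 0) (τ : ι → ℕ)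
    (hτ : ∑ i, τ i < S) (t : ℕ) (ht : t < N') : R.value p τ t = 0 := by
  have hτT : ∑ i, τ i ≤ T := hτ.le.trans hST
  set m := ∑ i, τ i + (Fintype.card ι + 1) * L * t
  have hD : 0 < D := hR.one_le_denom
  have hDm : (0 : ℝ) < D ^ m := by positivity
  have hderiv : ∀ k < N, ∀ i < W, iteratedDeriv i (R.auxFun p τ) k = 0 := fun k hk i hi ↦
    R.iteratedDeriv_auxFun_eq_zero p
      (fun τ' hτ' ↦ by rw [auxFun_natCast, hzero τ' hτ' k hk, map_zero]) i τ (by omega)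
  have hcircle : ∀ z : ℂ, ‖z‖ = 5 * N' → ‖R.auxFun p τ z‖ ≤ R.sizeBound L D B P T N' / D ^ m :=
    fun z hz ↦ (le_div_iff₀' hDm).mpr (hR.pow_mul_norm_auxFun_le hL (hp R.σ) hτT ht.le hz)
  have hsmall : ‖R.σ (D ^ m * R.value p τ t)‖ * 2 ^ (W * N) ≤ R.sizeBound L D B P T N' := by
    have hschwarz := norm_natCast_mul_two_pow_le (R.differentiable_auxFun p τ) hN' hNN' hderiv
      hcircle ht
    rw [auxFun_natCast, le_div_iff₀' hDm] at hschwarz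
    simpa only [map_mul, map_pow, map_natCast, norm_mul, norm_pow, Complex.norm_natCast,
      mul_assoc] using hschwarz
  have hprod := eq_zero_of_isIntegral_of_norm_mul_le (hR.isIntegral_pow_mul_value hint τ t) R.σ
    (fun φ ↦ hR.norm_pow_mul_value_le hL (hp φ) hτT ht.le) (by positivity) hsmall hsize
  exact (mul_eq_zero.mp hprod).resolve_left (pow_ne_zero _ (Nat.cast_ne_zero.mpr hD.ne'))

end HeightBound

end Extrapolation

section Parameters

/-- The number of extrapolation steps. -/
def numSteps (n : ℕ) : ℕ := 4 * (n + 1) ^ 2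

/-- The number of orders of differentiation given up in each extrapolation step. -/
def orderDrop (n X : ℕ) : ℕ := X ^ (4 * n + 4)

/-- The bound for the exponents of the auxiliary exponential polynomial. -/
def expBound (n X : ℕ) : ℕ := X ^ (4 * n + 2)

/-- The initial order of vanishing of the auxiliary function. -/
def initialOrder (n X : ℕ) : ℕ := (numSteps n + 1) * orderDrop n X

/-- The exponent of `X` in the bound for the entries of the linear system that determines the
auxiliary function. -/
def entryExponent (n X : ℕ) : ℕ :=
  (4 * n + 3) * (n * initialOrder n X) + (n + 1) * expBound n X * X

/-- The exponent of `X` in the bound for the coefficients of the auxiliary function. -/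
def coeffExponent (n X : ℕ) : ℕ := 2 + (4 * n + 2) * (n + 1) + entryExponent n X

/-- A constant such that `sizeBound` at extrapolation step `j` is at most
`X ^ (sizeExponent n * (orderDrop n X * X ^ j))`. -/
def sizeExponent (n : ℕ) : ℕ :=
  2 * ((4 * n + 2) * (n + 1)) + 2 + (4 * n + 3) * (n + 1) * (numSteps n + 1) + 2 * (n + 1) + 1

/-- The parameter `X` is large enough, in terms of the data of the relation and the constant `c`
of Siegel's lemma, for Baker's construction over a field of degree `d`. -/
structure IsLarge (R : LogRelation K ι) (d D : ℕ) (B c : ℝ) (X : ℕ) : Prop where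
  const_le : c ≤ X
  height_le : D * B ≤ X
  exp_le : Real.exp (5 * ∑ j, ‖R.lam j‖) ≤ X
  two_mul_le : 2 * (numSteps (Fintype.card ι) + 1) ^ Fintype.card ι ≤ X
  pow_lt : ((X : ℝ) ^ sizeExponent (Fintype.card ι)) ^ d < 2 ^ X

theorem exists_isLarge (R : LogRelation K ι) (d D : ℕ) (B c : ℝ) : ∃ X, R.IsLarge d D B c X := by
  have hpow : ∀ᶠ X : ℕ in atTop,
      ((X : ℝ) ^ sizeExponent (Fintype.card ι)) ^ d < 2 ^ X := by
    have hlim := tendsto_pow_const_div_const_pow_of_one_lt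
      (sizeExponent (Fintype.card ι) * d) (one_lt_two (α := ℝ))
    filter_upwards [hlim.eventually_lt_const one_pos] with X hX
    rwa [div_lt_one (by positivity), pow_mul] at hX
  have hge (y : ℝ) : ∀ᶠ X : ℕ in atTop, y ≤ X :=
    tendsto_natCast_atTop_atTop.eventually_ge_atTop y
  obtain ⟨X, hX⟩ := ((hge c).and <| (hge (D * B)).and <| (hge _).and <|
    (eventually_ge_atTop _).and hpow).exists
  exact ⟨X, hX.1, hX.2.1, hX.2.2.1, hX.2.2.2.1, hX.2.2.2.2⟩

theorem expBound_mul_pow (n X j : ℕ) : expBound n X * X ^ (j + 2) = orderDrop n X * X ^ j := by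
  rw [expBound, orderDrop]
  ring

theorem expBound_mul_le (n X j : ℕ) :
    expBound n X * X ≤ orderDrop n X * X ^ j :=
  calc expBound n X * X ≤ expBound n X * X ^ (j + 2) :=
        Nat.mul_le_mul_left _ (Nat.le_self_pow (by omega) X)
    _ = orderDrop n X * X ^ j := expBound_mul_pow n X j

theorem exponent_le (n : ℕ) {X : ℕ} (hX : 0 < X) (j : ℕ) :
    (4 * n + 2) * (n + 1) + (coeffExponent n X + ((4 * n + 3) * initialOrder n X +
      ((n + 1) * expBound n X * X ^ (j + 2) + expBound n X * X ^ (j + 2)))) ≤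
      sizeExponent n * (orderDrop n X * X ^ j) := by
  have hone : 1 ≤ orderDrop n X * X ^ j := Nat.mul_pos (Nat.pow_pos hX) (Nat.pow_pos hX)
  have hdrop : orderDrop n X ≤ orderDrop n X * X ^ j :=
    Nat.le_mul_of_pos_right _ (Nat.pow_pos hX)
  have hexp := expBound_mul_le n X j
  rw [coeffExponent, entryExponent, initialOrder, sizeExponent, mul_assoc (n + 1),
    mul_assoc (n + 1), expBound_mul_pow]
  generalize orderDrop n X * X ^ j = V at *
  calc _ = (2 * ((4 * n + 2) * (n + 1)) + 2) * 1 +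
        (4 * n + 3) * (n + 1) * (numSteps n + 1) * orderDrop n X +
        (n + 1) * (expBound n X * X) + (n + 2) * V := by ring
    _ ≤ (2 * ((4 * n + 2) * (n + 1)) + 2) * V + (4 * n + 3) * (n + 1) * (numSteps n + 1) * V +
        (n + 1) * V + (n + 2) * V := by gcongr
    _ = _ := by ring

namespace IsLarge

variable {d X : ℕ} {c : ℝ}

theorem pos (hX : R.IsLarge d D B c X) : 0 < X :=
  (Nat.mul_pos two_pos (Nat.pow_pos (Nat.succ_pos _))).trans_le hX.two_mul_le

theorem denom_mul_le (hX : R.IsLarge d D B c X) :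
    D * (expBound (Fintype.card ι) X * B) ≤ (X : ℝ) ^ (4 * Fintype.card ι + 3) :=
  calc D * (expBound (Fintype.card ι) X * B)
      = (X : ℝ) ^ (4 * Fintype.card ι + 2) * (D * B) := by rw [expBound]; push_cast; ring
    _ ≤ (X : ℝ) ^ (4 * Fintype.card ι + 2) * X := by gcongr; exact hX.height_le
    _ = _ := (pow_succ _ _).symm

theorem two_mul_card_equations_le (hX : R.IsLarge d D B c X) :
    2 * (initialOrder (Fintype.card ι) X ^ Fintype.card ι * X) ≤
      expBound (Fintype.card ι) X ^ (Fintype.card ι + 1) := by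
  set n := Fintype.card ι
  rw [initialOrder, orderDrop, expBound, mul_pow]
  calc 2 * ((numSteps n + 1) ^ n * (X ^ (4 * n + 4)) ^ n * X)
      = 2 * (numSteps n + 1) ^ n * (X ^ (4 * n + 4)) ^ n * X := by ring
    _ ≤ X * (X ^ (4 * n + 4)) ^ n * X := by gcongr; exact hX.two_mul_le
    _ = X ^ ((4 * n + 4) * n + 2) := by ring
    _ ≤ X ^ ((4 * n + 2) * (n + 1)) := Nat.pow_le_pow_right hX.pos (by nlinarith)
    _ = _ := pow_mul _ _ _

theorem sizeBound_le (hX : R.IsLarge d D B c X) (hR : R.HeightBound D B) (j : ℕ) :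
    R.sizeBound (expBound (Fintype.card ι) X) D B (X ^ coeffExponent (Fintype.card ι) X)
      (initialOrder (Fintype.card ι) X) (X ^ (j + 2)) ≤
      X ^ (sizeExponent (Fintype.card ι) * (orderDrop (Fintype.card ι) X * X ^ j)) := by
  have hB := zero_le_one.trans hR.one_le_bound
  have hX1 : (1 : ℝ) ≤ X := by exact_mod_cast hX.pos
  set n := Fintype.card ι
  have hexp : Real.exp (expBound n X * (∑ j, ‖R.lam j‖) * (5 * (X ^ (j + 2) : ℕ))) ≤
      X ^ (expBound n X * X ^ (j + 2)) := by
    calc _ = Real.exp (5 * ∑ j, ‖R.lam j‖) ^ (expBound n X * X ^ (j + 2)) := by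
          rw [← Real.exp_nat_mul]
          push_cast
          ring_nf
      _ ≤ _ := by gcongr; exact hX.exp_le
  calc _ ≤ ((X : ℝ) ^ (4 * n + 2)) ^ (n + 1) * (X ^ coeffExponent n X *
        ((X ^ (4 * n + 3)) ^ initialOrder n X * (X ^ ((n + 1) * expBound n X * X ^ (j + 2)) *
          X ^ (expBound n X * X ^ (j + 2))))) := by
        rw [sizeBound]
        gcongr
        · rw [expBound, Nat.cast_pow]
        · exact hX.denom_mul_le
        · exact hX.height_le
    _ = X ^ ((4 * n + 2) * (n + 1) + (coeffExponent n X + ((4 * n + 3) * initialOrder n X +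
          ((n + 1) * expBound n X * X ^ (j + 2) + expBound n X * X ^ (j + 2))))) := by
        simp only [pow_add, pow_mul]
    _ ≤ _ := pow_le_pow_right₀ hX1 (exponent_le n hX.pos j)

theorem sizeBound_pow_lt (hX : R.IsLarge d D B c X) (hR : R.HeightBound D B) (j : ℕ) :
    R.sizeBound (expBound (Fintype.card ι) X) D B (X ^ coeffExponent (Fintype.card ι) X)
      (initialOrder (Fintype.card ι) X) (X ^ (j + 2)) ^ d <
      2 ^ (orderDrop (Fintype.card ι) X * X ^ (j + 1)) := by
  have hB := zero_le_one.trans hR.one_le_bound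
  have hpos : 0 < orderDrop (Fintype.card ι) X * X ^ j :=
    Nat.mul_pos (Nat.pow_pos hX.pos) (Nat.pow_pos hX.pos)
  calc _ ≤ ((X : ℝ) ^ (sizeExponent (Fintype.card ι) *
          (orderDrop (Fintype.card ι) X * X ^ j))) ^ d := by
        refine pow_le_pow_left₀ ?_ (hX.sizeBound_le hR j) _
        unfold sizeBound
        positivity
    _ = (((X : ℝ) ^ sizeExponent (Fintype.card ι)) ^ d) ^
          (orderDrop (Fintype.card ι) X * X ^ j) := by
        rw [pow_mul, pow_right_comm]
    _ < (2 ^ X) ^ (orderDrop (Fintype.card ι) X * X ^ j) :=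
        pow_lt_pow_left₀ hX.pow_lt (by positivity) hpos.ne'
    _ = _ := by rw [← pow_mul]; ring_nf

end IsLarge

end Parameters

section Baker

theorem HeightBound.norm_pow_mul_term_le (hR : R.HeightBound D B) (φ : K →+* ℂ) (τ : ι → ℕ) (t : ℕ)
    (a : Option ι → Fin L) :
    ‖φ (D ^ (∑ i, τ i + (Fintype.card ι + 1) * L * t) * (R.weight τ a * R.base a ^ t))‖ ≤
      (D * (L * B)) ^ (∑ i, τ i) * (D * B) ^ ((Fintype.card ι + 1) * L * t) := by
  rw [map_mul, norm_mul, map_pow, map_natCast, norm_pow, Complex.norm_natCast, mul_pow, mul_pow,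
    pow_add]
  exact (mul_le_mul_of_nonneg_left (hR.norm_term_le φ τ t a) (by positivity)).trans_eq (by ring)

variable {d X : ℕ} {c : ℝ}

theorem IsLarge.norm_pow_mul_term_le (hX : R.IsLarge d D B c X) (hR : R.HeightBound D B)
    (φ : K →+* ℂ) {τ : ι → ℕ} (hτ : ∀ i, τ i < initialOrder (Fintype.card ι) X) {t : ℕ}
    (ht : t < X) (a : Option ι → Fin (expBound (Fintype.card ι) X)) :
    ‖φ (D ^ (∑ i, τ i + (Fintype.card ι + 1) * expBound (Fintype.card ι) X * t) *
      (R.weight τ a * R.base a ^ t))‖ ≤ X ^ entryExponent (Fintype.card ι) X := by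
  have hB := zero_le_one.trans hR.one_le_bound
  have hX1 : (1 : ℝ) ≤ X := by exact_mod_cast hX.pos
  have hsum : ∑ i, τ i ≤ Fintype.card ι * initialOrder (Fintype.card ι) X := by
    simpa using sum_le_card_nsmul univ τ _ fun i _ ↦ (hτ i).le
  calc _ ≤ (D * (expBound (Fintype.card ι) X * B)) ^ (∑ i, τ i) *
        (D * B) ^ ((Fintype.card ι + 1) * expBound (Fintype.card ι) X * t) :=
        hR.norm_pow_mul_term_le φ τ t a
    _ ≤ ((X : ℝ) ^ (4 * Fintype.card ι + 3)) ^ (∑ i, τ i) *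
        X ^ ((Fintype.card ι + 1) * expBound (Fintype.card ι) X * t) := by
        gcongr
        · exact hX.denom_mul_le
        · exact hX.height_le
    _ = X ^ ((4 * Fintype.card ι + 3) * (∑ i, τ i) +
          (Fintype.card ι + 1) * expBound (Fintype.card ι) X * t) := by rw [← pow_mul, ← pow_add]
    _ ≤ X ^ entryExponent (Fintype.card ι) X := by
        rw [entryExponent]
        gcongr

theorem IsLarge.const_mul_le (hX : R.IsLarge d D B c X) (hc : 0 ≤ c) :
    c * (c * ((expBound (Fintype.card ι) X ^ (Fintype.card ι + 1) : ℕ) *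
      (X : ℝ) ^ entryExponent (Fintype.card ι) X)) ≤ X ^ coeffExponent (Fintype.card ι) X :=
  calc _ ≤ (X : ℝ) * (X * ((expBound (Fintype.card ι) X ^ (Fintype.card ι + 1) : ℕ) *
        X ^ entryExponent (Fintype.card ι) X)) := by
        gcongr <;> exact hX.const_le
    _ = _ := by
        rw [coeffExponent, expBound]
        push_cast
        ring

variable [NumberField K]

theorem HeightBound.exists_auxiliary_coeff [DecidableEq ι] (hR : R.HeightBound D B) :
    ∃ c, ∀ X, R.IsLarge d D B c X →
      ∃ p : (Option ι → Fin (expBound (Fintype.card ι) X)) → K, p ≠ 0 ∧ (∀ a, IsIntegral ℤ (p a)) ∧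
        (∀ (φ : K →+* ℂ) a, ‖φ (p a)‖ ≤ (X : ℝ) ^ coeffExponent (Fintype.card ι) X) ∧
        ∀ τ : ι → ℕ, ∑ i, τ i < initialOrder (Fintype.card ι) X → ∀ t < X, R.value p τ t = 0 := by
  obtain ⟨c, hc, hsiegel⟩ := exists_siegel_const K
  refine ⟨c, fun X hX ↦ ?_⟩
  let M : Matrix ((ι → Fin (initialOrder (Fintype.card ι) X)) × Fin X)
      (Option ι → Fin (expBound (Fintype.card ι) X)) (NumberField.RingOfIntegers K) :=
    fun k a ↦ ⟨_, hR.isIntegral_pow_mul_term (fun i ↦ k.1 i) k.2 a⟩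
  have hcard : Fintype.card (Option ι → Fin (expBound (Fintype.card ι) X)) =
      expBound (Fintype.card ι) X ^ (Fintype.card ι + 1) := by simp
  obtain ⟨ξ, hξ, hMξ, hξle⟩ := hsiegel M (X ^ entryExponent (Fintype.card ι) X)
    (one_le_pow₀ (by exact_mod_cast hX.pos))
    (hcard ▸ Nat.pow_pos (Nat.pow_pos hX.pos)) (by simpa using hX.two_mul_card_equations_le)
    fun k a φ ↦ hX.norm_pow_mul_term_le hR φ (fun i ↦ (k.1 i).isLt) k.2.isLt a
  refine ⟨fun a ↦ ξ a, fun h ↦ hξ (funext fun a ↦ ?_), fun a ↦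
    NumberField.RingOfIntegers.isIntegral_coe _, fun φ a ↦ (hξle a φ).trans ?_, fun τ hτ t ht ↦ ?_⟩
  · exact NumberField.RingOfIntegers.coe_eq_zero_iff.mp (congrFun h a)
  · simpa only [hcard] using hX.const_mul_le (zero_le_one.trans hc)
  · have hτi (i : ι) : τ i < initialOrder (Fintype.card ι) X :=
      (single_le_sum (fun _ _ ↦ Nat.zero_le _) (mem_univ i)).trans_lt hτ
    have hrow : ∑ a, (D : K) ^ (∑ i, τ i +
        (Fintype.card ι + 1) * expBound (Fintype.card ι) X * t) *
          (R.weight τ a * R.base a ^ t) * ξ a = 0 :=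
      (map_sum (algebraMap (NumberField.RingOfIntegers K) K) _ _).symm.trans
        (congrArg _ (congrFun hMξ (fun i ↦ ⟨τ i, hτi i⟩, ⟨t, ht⟩)))
    simp only [mul_assoc, ← mul_sum, mul_eq_zero] at hrow
    have hD : (D : K) ≠ 0 := Nat.cast_ne_zero.mpr (Nat.one_le_iff_ne_zero.mp hR.one_le_denom)
    rw [value, ← hrow.resolve_left (pow_ne_zero _ hD)]
    exact sum_congr rfl fun a _ ↦ by ring

theorem IsLarge.value_eq_zero_of_le_numSteps [DecidableEq ι]
    (hX : R.IsLarge (Module.finrank ℚ K) D B c X) (hR : R.HeightBound D B)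
    {p : (Option ι → Fin (expBound (Fintype.card ι) X)) → K} (hint : ∀ a, IsIntegral ℤ (p a))
    (hp : ∀ (φ : K →+* ℂ) a, ‖φ (p a)‖ ≤ (X : ℝ) ^ coeffExponent (Fintype.card ι) X)
    (hzero : ∀ τ : ι → ℕ, ∑ i, τ i < initialOrder (Fintype.card ι) X →
      ∀ t < X, R.value p τ t = 0) {j : ℕ} (hj : j ≤ numSteps (Fintype.card ι)) :
    ∀ τ : ι → ℕ,
      ∑ i, τ i < (numSteps (Fintype.card ι) + 1 - j) * orderDrop (Fintype.card ι) X →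
        ∀ t < X ^ (j + 1), R.value p τ t = 0 := by
  induction j with
  | zero => simpa [initialOrder] using hzero
  | succ j ih =>
    have hdrop : (numSteps (Fintype.card ι) + 1 - j) * orderDrop (Fintype.card ι) X =
        (numSteps (Fintype.card ι) + 1 - (j + 1)) * orderDrop (Fintype.card ι) X +
          orderDrop (Fintype.card ι) X := by
      rw [← Nat.succ_mul]
      congr 1
      omega
    exact hR.value_eq_zero_of_sizeBound_pow_lt (Nat.pow_pos hX.pos) hint hp
      (Nat.mul_le_mul_right _ (Nat.sub_le _ _)) (Nat.pow_pos hX.pos)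
      (Nat.pow_le_pow_right hX.pos (by omega)) (hX.sizeBound_pow_lt hR j)
      (hdrop ▸ ih (by omega))

theorem not_linearIndependent (R : LogRelation K ι) : ¬ LinearIndependent ℤ R.lam := by
  classical
  intro hli
  obtain ⟨D, B, hR⟩ := R.exists_heightBound
  obtain ⟨c, hcoeff⟩ := hR.exists_auxiliary_coeff
  obtain ⟨X, hX⟩ := R.exists_isLarge (Module.finrank ℚ K) D B c
  obtain ⟨p, hp, hint, hle, hzero⟩ := hcoeff X hX
  refine hp (eq_zero_of_forall_value_eq_zero hli fun τ hτ t ht ↦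
    hX.value_eq_zero_of_le_numSteps hR hint hle hzero le_rfl τ (hτ.trans_le ?_) t
      (ht.trans_le ?_))
  · rw [Nat.add_sub_cancel_left, one_mul]
    exact Nat.pow_le_pow_right hX.pos (by omega)
  · rw [expBound, ← pow_mul, numSteps]
    exact Nat.pow_le_pow_right hX.pos (by nlinarith)

end Baker

end LogRelation

section Conjugation

variable {K ι : Type*} [Field K] [NumberField K] [Fintype ι]

theorem eq_zero_of_sum_mul_log_eq_zero (σ : K →+* ℂ) {α : ι → K} {lam : ι → ℂ}
    (hexp : ∀ i, Complex.exp (lam i) = σ (α i)) (hli : LinearIndependent ℚ lam) {γ : ι → K}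
    (h : ∑ i, σ (γ i) * lam i = 0) : γ = 0 := by
  classical
  by_contra hne
  obtain ⟨j, hj⟩ := Function.ne_iff.mp hne
  have hσ : σ (γ j) ≠ 0 := (map_ne_zero σ).mpr hj
  let e := Equiv.optionSubtypeNe j
  let R : LogRelation K {i // i ≠ j} :=
    { σ := σ
      lam := lam ∘ e
      α := α ∘ e
      β := fun i ↦ -γ i / γ j
      exp_lam := fun i ↦ hexp _
      lam_none := by
        rw [← e.sum_comp, Fintype.sum_option] at h
        simp only [e, Equiv.optionSubtypeNe_none, Equiv.optionSubtypeNe_some] at h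
        simp only [Function.comp_apply, e, Equiv.optionSubtypeNe_none, Equiv.optionSubtypeNe_some,
          map_div₀, map_neg, neg_div, neg_mul, sum_neg_distrib, div_mul_eq_mul_div, ← sum_div]
        field_simp
        linear_combination h }
  exact R.not_linearIndependent ((hli.comp e e.injective).restrict_scalars' ℤ)

-- Rewriting the relation in terms of a `ℚ`-basis of the span of the logarithms, all its
-- coefficients vanish, and this is a property invariant under conjugation.
theorem sum_mul_log_eq_zero_of_sum_mul_log_eq_zero {σ : K →+* ℂ} {α β : ι → K} {lam : ι → ℂ}
    (hexp : ∀ i, Complex.exp (lam i) = σ (α i)) (h : ∑ i, σ (β i) * lam i = 0) (σ' : K →+* ℂ) :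
    ∑ i, σ' (β i) * lam i = 0 := by
  obtain ⟨κ, e, he, hspan, hli⟩ := exists_linearIndependent' ℚ lam
  have : Finite κ := Finite.of_injective e he
  have := Fintype.ofFinite κ
  have hcomb (i : ι) : ∃ r : κ → ℚ, ∑ j, r j • (lam ∘ e) j = lam i := by
    rw [← Submodule.mem_span_range_iff_exists_fun, hspan]
    exact Submodule.subset_span ⟨i, rfl⟩
  choose r hr using hcomb
  have hbasis (φ : K →+* ℂ) :
      ∑ i, φ (β i) * lam i = ∑ j, φ (∑ i, β i * (r i j : K)) * (lam ∘ e) j := by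
    simp only [← hr, mul_sum, map_sum, sum_mul]
    rw [sum_comm]
    refine sum_congr rfl fun j _ ↦ sum_congr rfl fun i _ ↦ ?_
    rw [map_mul, map_ratCast, Rat.smul_def, mul_assoc]
  rw [hbasis] at h ⊢
  have hzero := eq_zero_of_sum_mul_log_eq_zero σ (fun j ↦ hexp (e j)) hli h
  simp only [funext_iff, Pi.zero_apply] at hzero
  simp [hzero]

end Conjugation

/-! ### Harmonic sums of periodic functions -/

section HarmonicSum

/-- The conditionally convergent series `∑ a n / n` has sum `ℓ`. The term `n = 0` contributes
nothing, as `a 0 / 0 = 0`. -/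
def HasHarmonicSum (a : ℕ → ℂ) (ℓ : ℂ) : Prop :=
  Tendsto (fun N ↦ ∑ n ∈ range N, a n / n) atTop (𝓝 ℓ)

theorem HasHarmonicSum.sub {a b : ℕ → ℂ} {ℓ ℓ' : ℂ} (ha : HasHarmonicSum a ℓ)
    (hb : HasHarmonicSum b ℓ') : HasHarmonicSum (fun n ↦ a n - b n) (ℓ - ℓ') := by
  refine (Tendsto.sub ha hb).congr fun N ↦ ?_
  simp only [sub_div, sum_sub_distrib]

theorem sum_range_mul_eq_add_sum_range (w a : ℕ → ℂ) (N : ℕ) :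
    ∑ n ∈ range N, w n * a n = w N * ∑ n ∈ range N, a n +
      ∑ n ∈ range N, (w n - w (n + 1)) * ∑ i ∈ range (n + 1), a i := by
  induction N with
  | zero => simp
  | succ N ih =>
    rw [sum_range_succ, ih, sum_range_succ (fun n ↦ (w n - w (n + 1)) * _), sum_range_succ a N]
    ring

theorem tendsto_sum_range_mul {w a : ℕ → ℂ} {C : ℝ} (hC : ∀ N, ‖∑ n ∈ range N, a n‖ ≤ C)
    (hw : Tendsto w atTop (𝓝 0))
    (hsum : Summable fun n ↦ (w n - w (n + 1)) * ∑ i ∈ range (n + 1), a i) :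
    Tendsto (fun N ↦ ∑ n ∈ range N, w n * a n) atTop
      (𝓝 (∑' n, (w n - w (n + 1)) * ∑ i ∈ range (n + 1), a i)) := by
  simp only [sum_range_mul_eq_add_sum_range w a]
  rw [← zero_add (∑' n, _)]
  refine Tendsto.add ?_ hsum.hasSum.tendsto_sum_nat
  exact hw.zero_mul_isBoundedUnder_le (isBoundedUnder_of ⟨C, hC⟩)

theorem abs_rpow_neg_sub_rpow_neg_le {s : ℝ} (h1 : 1 ≤ s) (h2 : s ≤ 2) (n : ℕ) :
    |(n : ℝ) ^ (-s) - ((n + 1 : ℕ) : ℝ) ^ (-s)| ≤ 4 * (((n + 1 : ℕ) : ℝ) ^ 2)⁻¹ := by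
  rcases n.eq_zero_or_pos with rfl | hn
  · rw [Nat.cast_zero, Real.zero_rpow (by linarith)]
    norm_num
  have hx1 : (1 : ℝ) ≤ n := by exact_mod_cast hn
  push_cast
  generalize (n : ℝ) = x at hx1 ⊢
  have hx : x ≤ x ^ s := Real.self_le_rpow_of_one_le hx1 h1
  have hbernoulli : 1 - s / (x + 1) ≤ x ^ s / (x + 1) ^ s := by
    rw [← Real.div_rpow (by positivity) (by positivity)]
    convert one_add_mul_self_le_rpow_one_add (s := -(1 / (x + 1))) ?_ h1 using 1
    · ring
    · congr 1
      field_simp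
      ring
    · rw [neg_le_neg_iff, div_le_one (by positivity)]
      linarith
  rw [abs_of_nonneg (sub_nonneg.mpr (Real.rpow_le_rpow_of_nonpos (by positivity) (by linarith)
    (by linarith))), Real.rpow_neg (by positivity), Real.rpow_neg (by positivity)]
  calc (x ^ s)⁻¹ - ((x + 1) ^ s)⁻¹ = (x ^ s)⁻¹ * (1 - x ^ s / (x + 1) ^ s) := by field_simp
    _ ≤ (x ^ s)⁻¹ * (s / (x + 1)) := by
        gcongr
        linarith
    _ ≤ x⁻¹ * (2 / (x + 1)) := by gcongr
    _ = 2 / (x * (x + 1)) := by field_simp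
    _ ≤ 4 * ((x + 1) ^ 2)⁻¹ := by
        rw [← div_eq_mul_inv, div_le_div_iff₀ (by positivity) (by positivity)]
        nlinarith

theorem summable_const_mul_inv_succ_sq (C : ℝ) :
    Summable fun n : ℕ ↦ C * (((n + 1 : ℕ) : ℝ) ^ 2)⁻¹ :=
  ((summable_nat_add_iff 1).mpr (Real.summable_nat_pow_inv.mpr one_lt_two)).mul_left C

variable {a : ℕ → ℂ} {C : ℝ}

theorem norm_rpow_neg_sub_mul_sum_le (hC : ∀ N, ‖∑ n ∈ range N, a n‖ ≤ C) {s : ℝ} (h1 : 1 ≤ s)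
    (h2 : s ≤ 2) (n : ℕ) :
    ‖(((n : ℝ) ^ (-s) : ℝ) - (((n + 1 : ℕ) : ℝ) ^ (-s) : ℝ) : ℂ) * ∑ i ∈ range (n + 1), a i‖ ≤
      4 * C * (((n + 1 : ℕ) : ℝ) ^ 2)⁻¹ := by
  rw [norm_mul, ← Complex.ofReal_sub, Complex.norm_real, Real.norm_eq_abs, mul_right_comm]
  exact mul_le_mul (abs_rpow_neg_sub_rpow_neg_le h1 h2 n) (hC _) (norm_nonneg _) (by positivity)

theorem tendsto_sum_range_rpow_neg_mul (hC : ∀ N, ‖∑ n ∈ range N, a n‖ ≤ C) {s : ℝ} (h1 : 1 ≤ s)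
    (h2 : s ≤ 2) :
    Tendsto (fun N ↦ ∑ n ∈ range N, (((n : ℝ) ^ (-s) : ℝ) : ℂ) * a n) atTop
      (𝓝 (∑' n : ℕ, (((n : ℝ) ^ (-s) : ℝ) - (((n + 1 : ℕ) : ℝ) ^ (-s) : ℝ) : ℂ) *
        ∑ i ∈ range (n + 1), a i)) := by
  refine tendsto_sum_range_mul (w := fun n ↦ (((n : ℝ) ^ (-s) : ℝ) : ℂ)) hC ?_ ?_
  · exact_mod_cast (Complex.continuous_ofReal.tendsto 0).comp
      ((tendsto_rpow_neg_atTop (by linarith : 0 < s)).comp tendsto_natCast_atTop_atTop)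
  · exact .of_norm_bounded (summable_const_mul_inv_succ_sq _)
      (norm_rpow_neg_sub_mul_sum_le hC h1 h2)

theorem continuous_rpow_neg {x : ℝ} (hx : x ≠ 0) : Continuous fun s : ℝ ↦ x ^ (-s) :=
  continuous_const.rpow continuous_neg fun _ ↦ Or.inl hx

theorem tendsto_natCast_rpow_neg (n : ℕ) :
    Tendsto (fun s : ℝ ↦ (((n : ℝ) ^ (-s) : ℝ) : ℂ)) (𝓝[>] 1) (𝓝 ((n : ℝ) ^ (-1 : ℝ) : ℝ)) := by
  refine (Complex.continuous_ofReal.tendsto _).comp ?_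
  rcases n.eq_zero_or_pos with rfl | hn
  · refine tendsto_nhds_of_eventually_eq ?_
    filter_upwards [self_mem_nhdsWithin] with s hs
    have hs : (1 : ℝ) < s := hs
    rw [Nat.cast_zero, Real.zero_rpow (by linarith), Real.zero_rpow (by norm_num)]
  · exact ((continuous_rpow_neg (by positivity)).tendsto 1).mono_left nhdsWithin_le_nhds

theorem LSeries_term_ofReal {s : ℝ} (hs : s ≠ 0) (a : ℕ → ℂ) (n : ℕ) :
    LSeries.term a s n = (((n : ℝ) ^ (-s) : ℝ) : ℂ) * a n := by
  rcases eq_or_ne n 0 with rfl | hn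
  · simp [Real.zero_rpow (neg_ne_zero.mpr hs)]
  · rw [LSeries.term_of_ne_zero hn, Complex.ofReal_cpow (by positivity), Complex.ofReal_neg,
      Complex.cpow_neg, Complex.ofReal_natCast, div_eq_inv_mul]

-- Summation by parts makes both sides sums of absolutely convergent series, the one for
-- `LSeries a s` being dominated uniformly in `1 ≤ s ≤ 2`.
theorem exists_hasHarmonicSum_and_tendsto_LSeries (hC : ∀ N, ‖∑ n ∈ range N, a n‖ ≤ C)
    (hsum : ∀ s : ℝ, 1 < s → LSeriesSummable a s) :
    ∃ ℓ, HasHarmonicSum a ℓ ∧ Tendsto (fun s : ℝ ↦ LSeries a s) (𝓝[>] 1) (𝓝 ℓ) := by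
  refine ⟨_, (tendsto_sum_range_rpow_neg_mul hC le_rfl one_le_two).congr fun N ↦ ?_, ?_⟩
  · refine sum_congr rfl fun n _ ↦ ?_
    rw [Real.rpow_neg_one, Complex.ofReal_inv, Complex.ofReal_natCast, inv_mul_eq_div]
  have hIoo : Set.Ioo 1 2 ∈ 𝓝[>] (1 : ℝ) := Ioo_mem_nhdsGT one_lt_two
  refine (tendsto_tsum_of_dominated_convergence (summable_const_mul_inv_succ_sq (4 * C))
    (fun n ↦ ((tendsto_natCast_rpow_neg n).sub (tendsto_natCast_rpow_neg (n + 1))).mul_const _)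
    ?_).congr' ?_
  · filter_upwards [hIoo] with s hs using norm_rpow_neg_sub_mul_sum_le hC hs.1.le hs.2.le
  · filter_upwards [hIoo] with s hs
    refine tendsto_nhds_unique (tendsto_sum_range_rpow_neg_mul hC hs.1.le hs.2.le) ?_
    refine (hsum s hs.1).hasSum.tendsto_sum_nat.congr fun N ↦ ?_
    simp only [LSeries_term_ofReal (by linarith [hs.1] : s ≠ 0)]

variable {q : ℕ} [NeZero q] {F : ZMod q → ℂ}

theorem sum_range_natCast_zmod (F : ZMod q → ℂ) : ∑ n ∈ range q, F n = ∑ b, F b :=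
  sum_nbij' (fun n ↦ (n : ZMod q)) ZMod.val (by simp) (by simp [ZMod.val_lt])
    (fun n hn ↦ ZMod.val_cast_of_lt (mem_range.mp hn)) (by simp) (by simp)

theorem exists_norm_sum_range_le_of_sum_eq_zero (hF : ∑ b, F b = 0) :
    ∃ C : ℝ, ∀ N, ‖∑ n ∈ range N, F n‖ ≤ C := by
  have hper : Function.Periodic (fun N ↦ ∑ n ∈ range N, F n) q := fun N ↦ by
    have hshift : ∑ n ∈ range q, F (N + n : ℕ) = 0 := by
      simp only [Nat.cast_add]
      rw [sum_range_natCast_zmod fun b ↦ F ((N : ZMod q) + b), ← hF]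
      exact Fintype.sum_equiv (Equiv.addLeft _) _ _ fun _ ↦ rfl
    simp only [sum_range_add, hshift, add_zero]
  refine ⟨∑ n ∈ range q, ‖F n‖, fun N ↦ ?_⟩
  rw [← hper.map_mod_nat N]
  refine (norm_sum_le _ _).trans (sum_le_sum_of_subset_of_nonneg ?_ fun _ _ _ ↦ norm_nonneg _)
  exact range_subset_range.mpr (Nat.mod_lt _ (NeZero.pos q)).le

theorem tendsto_ofReal_nhdsGT_one : Tendsto (fun s : ℝ ↦ (s : ℂ)) (𝓝[>] 1) (𝓝[≠] 1) := by
  refine tendsto_nhdsWithin_iff.mpr ⟨?_, ?_⟩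
  · exact ((Complex.continuous_ofReal.tendsto 1).mono_left nhdsWithin_le_nhds)
  · filter_upwards [self_mem_nhdsWithin] with s hs
    exact Complex.ofReal_ne_one.mpr (ne_of_gt hs)

theorem tendsto_LFunction_nhdsGT_one (hF : ∑ b, F b = 0) :
    Tendsto (fun s : ℝ ↦ ZMod.LFunction F s) (𝓝[>] 1) (𝓝 (ZMod.LFunction F 1)) :=
  ((ZMod.differentiable_LFunction_of_sum_zero hF).continuous.tendsto 1).comp
    (tendsto_ofReal_nhdsGT_one.mono_right nhdsWithin_le_nhds)

theorem hasHarmonicSum_LFunction_one (hF : ∑ b, F b = 0) :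
    HasHarmonicSum (fun n ↦ F n) (ZMod.LFunction F 1) := by
  obtain ⟨C, hC⟩ := exists_norm_sum_range_le_of_sum_eq_zero hF
  obtain ⟨ℓ, hsum, hlim⟩ := exists_hasHarmonicSum_and_tendsto_LSeries hC
    fun s hs ↦ ZMod.LSeriesSummable_of_one_lt_re F (by simpa using hs)
  convert hsum
  refine tendsto_nhds_unique (tendsto_LFunction_nhdsGT_one hF) (hlim.congr' ?_)
  filter_upwards [self_mem_nhdsWithin] with s hs
  exact (ZMod.LFunction_eq_LSeries F (by simpa using hs)).symm

theorem not_hasHarmonicSum_const {m : ℂ} (hm : m ≠ 0) (ℓ : ℂ) :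
    ¬ HasHarmonicSum (fun _ ↦ m) ℓ := by
  intro h
  have hreal := (Complex.continuous_re.tendsto _).comp (h.const_mul m⁻¹)
  refine not_tendsto_nhds_of_tendsto_atTop Real.tendsto_sum_range_one_div_nat_succ_atTop _
    ((hreal.comp (tendsto_add_atTop_nat 1)).congr fun N ↦ ?_)
  simp only [Function.comp_apply]
  rw [sum_range_succ', mul_add, mul_sum, Nat.cast_zero, div_zero, mul_zero, add_zero,
    Complex.re_sum]
  refine sum_congr rfl fun n _ ↦ ?_
  rw [mul_div_assoc', inv_mul_cancel₀ hm, ← Complex.ofReal_natCast, ← Complex.ofReal_one,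
    ← Complex.ofReal_div, Complex.ofReal_re, Nat.cast_succ]

-- The mean of `F` would contribute a multiple of the divergent harmonic series.
theorem HasHarmonicSum.sum_eq_zero {ℓ : ℂ} (h : HasHarmonicSum (fun n ↦ F n) ℓ) :
    ∑ b, F b = 0 := by
  by_contra hne
  have hq : (q : ℂ) ≠ 0 := NeZero.ne _
  have hcenter : ∑ b, (F b - (∑ c, F c) / q) = 0 := by
    rw [sum_sub_distrib, sum_const, card_univ, ZMod.card, nsmul_eq_mul, mul_div_cancel₀ _ hq,
      sub_self]
  have hconst := h.sub (hasHarmonicSum_LFunction_one hcenter)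
  simp only [sub_sub_cancel] at hconst
  exact not_hasHarmonicSum_const (div_ne_zero hne hq) _ hconst

theorem HasHarmonicSum.eq_LFunction_one {ℓ : ℂ} (h : HasHarmonicSum (fun n ↦ F n) ℓ) :
    ℓ = ZMod.LFunction F 1 :=
  tendsto_nhds_unique h (hasHarmonicSum_LFunction_one h.sum_eq_zero)

end HarmonicSum

/-! ### Conjugation invariance of the vanishing of `L(1, F)` -/

section Conjugates

theorem isPrimitive_compAddChar {A K L : Type*} [CommRing A] [Field K] [Field L] (φ : K →+* L)
    {ψ : AddChar A K} (hψ : ψ.IsPrimitive) : (φ.toMonoidHom.compAddChar ψ).IsPrimitive := by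
  intro a ha h
  refine hψ ha (DFunLike.ext _ _ fun b ↦ φ.injective ?_)
  simpa [AddChar.mulShift_apply] using DFunLike.congr_fun h b

variable {q : ℕ} [NeZero q]

/-- The discrete Fourier transform `∑ b, F b * ψ (-(a * b))` on `ZMod q`, with values in an
arbitrary ring `R`: for `R` a number field it can be moved by the embeddings of `R` into `ℂ`. -/
def zmodFourier {R : Type*} [CommRing R] (ψ : AddChar (ZMod q) R) (F : ZMod q → R) (a : ZMod q) :
    R :=
  ∑ b, F b * ψ (-(a * b))

section CommRing

variable {R S : Type*} [CommRing R] [CommRing S]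

theorem zmodFourier_zero (ψ : AddChar (ZMod q) R) (F : ZMod q → R) :
    zmodFourier ψ F 0 = ∑ b, F b := by
  simp [zmodFourier]

theorem map_zmodFourier (φ : R →+* S) (ψ : AddChar (ZMod q) R) (F : ZMod q → R) (a : ZMod q) :
    φ (zmodFourier ψ F a) =
      zmodFourier (φ.toMonoidHom.compAddChar ψ) (fun b ↦ φ (F b)) a := by
  simp [zmodFourier]

theorem zmodFourier_comp_units_mul (ψ : AddChar (ZMod q) R) (F : ZMod q → R) (u : (ZMod q)ˣ)
    (a : ZMod q) :
    zmodFourier ψ (fun b ↦ F (u * b)) a = zmodFourier ψ F (a * (u⁻¹ : (ZMod q)ˣ)) :=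
  Fintype.sum_equiv (Units.mulLeft u) _ _ fun b ↦ by
    rw [Units.mulLeft_apply, mul_assoc, Units.inv_mul_cancel_left]

theorem zmodFourier_mulShift (ψ : AddChar (ZMod q) R) (F : ZMod q → R) (a c : ZMod q) :
    zmodFourier (ψ.mulShift c) F a = zmodFourier ψ F (a * c) := by
  refine sum_congr rfl fun b _ ↦ ?_
  rw [AddChar.mulShift_apply, mul_neg, mul_comm c, mul_right_comm]

theorem sum_zmodFourier_mul [IsDomain R] {ψ : AddChar (ZMod q) R} (hψ : ψ.IsPrimitive)
    (F : ZMod q → R) (n : ZMod q) : ∑ a, zmodFourier ψ F a * ψ (a * n) = q * F n := by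
  have hortho (b : ZMod q) :
      ∑ a, F b * ψ (-(a * b)) * ψ (a * n) = if n = b then F b * q else 0 := by
    have hshift (a : ZMod q) : F b * ψ (-(a * b)) * ψ (a * n) = F b * ψ (a * (n - b)) := by
      rw [mul_assoc, ← AddChar.map_add_eq_mul, mul_sub, neg_add_eq_sub]
    simp only [hshift, ← mul_sum, AddChar.sum_mulShift _ hψ, sub_eq_zero, ZMod.card,
      Nat.cast_ite, Nat.cast_zero, mul_ite, mul_zero]
  simp only [zmodFourier, sum_mul]
  rw [sum_comm]
  simp only [hortho, sum_ite_eq, mem_univ, if_true]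
  exact mul_comm _ _

end CommRing

section PowerSeries

theorem one_sub_mem_slitPlane {z : ℂ} (hz : ‖z‖ = 1) (hz1 : z ≠ 1) : 1 - z ∈ Complex.slitPlane := by
  refine Or.inl ?_
  rw [Complex.sub_re, Complex.one_re, sub_pos]
  refine (hz ▸ Complex.re_le_norm z).lt_of_ne fun hre ↦ hz1 ?_
  have hnonneg := Complex.re_eq_norm.mp (hre.trans hz.symm)
  rw [Complex.eq_coe_norm_of_nonneg hnonneg, hz, Complex.ofReal_one]

variable {ψ : AddChar (ZMod q) ℂ} {F : ZMod q → ℂ}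

theorem hasSum_div_mul_pow (hψ : ψ.IsPrimitive) (F : ZMod q → ℂ) {x : ℝ} (hx : ‖x‖ < 1) :
    HasSum (fun n : ℕ ↦ F n / n * (x : ℂ) ^ n)
      ((q : ℂ)⁻¹ * ∑ a, zmodFourier ψ F a * -Complex.log (1 - x * ψ a)) := by
  have hlog (a : ZMod q) : HasSum (fun n : ℕ ↦ zmodFourier ψ F a * ((x * ψ a) ^ n / n))
      (zmodFourier ψ F a * -Complex.log (1 - x * ψ a)) := by
    refine (Complex.hasSum_taylorSeries_neg_log ?_).mul_left _
    rwa [norm_mul, AddChar.norm_apply, mul_one, Complex.norm_real]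
  refine ((hasSum_sum fun a _ ↦ hlog a).mul_left (q : ℂ)⁻¹).congr_fun fun n ↦ ?_
  have hpow (a : ZMod q) : zmodFourier ψ F a * ((x * ψ a) ^ n / n) =
      zmodFourier ψ F a * ψ (a * n) * ((x : ℂ) ^ n / n) := by
    rw [mul_pow, ← AddChar.map_nsmul_eq_pow, nsmul_eq_mul, mul_comm (n : ZMod q) a]
    ring
  have hq : (q : ℂ) ≠ 0 := NeZero.ne _
  simp only [hpow, ← sum_mul, sum_zmodFourier_mul hψ]
  field_simp

-- By Abel's theorem. The term `a = 0` vanishes because `F` has mean zero.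
theorem LFunction_one_eq_sum_log (hψ : ψ.IsPrimitive) (hF : ∑ b, F b = 0) :
    ZMod.LFunction F 1 = (q : ℂ)⁻¹ * ∑ a, zmodFourier ψ F a * -Complex.log (1 - ψ a) := by
  refine tendsto_nhds_unique (tendsto_map'_iff.mp
    (Complex.tendsto_tsum_powerSeries_nhdsWithin_lt (hasHarmonicSum_LFunction_one hF))) ?_
  have hlim : Tendsto (fun x : ℝ ↦ (q : ℂ)⁻¹ *
      ∑ a, zmodFourier ψ F a * -Complex.log (1 - x * ψ a)) (𝓝[<] 1)
      (𝓝 ((q : ℂ)⁻¹ * ∑ a, zmodFourier ψ F a * -Complex.log (1 - ψ a))) := by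
    refine (tendsto_finsetSum _ fun a _ ↦ ?_).const_mul _
    rcases eq_or_ne a 0 with rfl | ha
    · simp only [zmodFourier_zero, hF, zero_mul, tendsto_const_nhds]
    have hslit : 1 - ((1 : ℝ) : ℂ) * ψ a ∈ Complex.slitPlane := by
      rw [Complex.ofReal_one, one_mul]
      exact one_sub_mem_slitPlane (AddChar.norm_apply ψ a)
        fun h ↦ ha ((hψ.zmod_char_eq_one_iff q a).mp h)
    have hcont : ContinuousAt (fun x : ℝ ↦ zmodFourier ψ F a * -Complex.log (1 - x * ψ a)) 1 :=
      continuousAt_const.mul (ContinuousAt.clog (f := fun x : ℝ ↦ 1 - x * ψ a) (by fun_prop)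
        hslit).neg
    simpa only [Complex.ofReal_one, one_mul] using hcont.tendsto.mono_left nhdsWithin_le_nhds
  refine hlim.congr' ?_
  filter_upwards [Ioo_mem_nhdsLT (zero_lt_one (α := ℝ))] with x hx
  refine (hasSum_div_mul_pow hψ F ?_).tsum_eq.symm
  rw [Real.norm_eq_abs, abs_of_pos hx.1]
  exact hx.2

end PowerSeries

section NumberField

theorem exists_ringHom_compAddChar_eq_mulShift {K : Type*} [Field K] [NumberField K]
    [IsCyclotomicExtension {q} ℚ K] {ζ : K} (hζ : IsPrimitiveRoot ζ q) (σ : K →+* ℂ)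
    (u : (ZMod q)ˣ) :
    ∃ σ' : K →+* ℂ, σ'.toMonoidHom.compAddChar (AddChar.zmodChar q hζ.pow_eq_one) =
      (σ.toMonoidHom.compAddChar (AddChar.zmodChar q hζ.pow_eq_one)).mulShift u := by
  have hroot : IsPrimitiveRoot (σ ζ ^ (u : ZMod q).val) q :=
    (hζ.map_of_injective σ.injective).pow_of_coprime _ (ZMod.val_coe_unit_coprime u)
  let e := hζ.embeddingsEquivPrimitiveRoots ℂ
    (Polynomial.cyclotomic.irreducible_rat (NeZero.pos q))
  let z : primitiveRoots q ℂ := ⟨_, (mem_primitiveRoots (NeZero.pos q)).mpr hroot⟩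
  have hz : e.symm z ζ = σ ζ ^ (u : ZMod q).val := congrArg Subtype.val (e.apply_symm_apply z)
  refine ⟨(e.symm z : K →ₐ[ℚ] ℂ), DFunLike.ext _ _ fun a ↦ ?_⟩
  have hua : AddChar.zmodChar q hζ.pow_eq_one (u * a) = ζ ^ ((u : ZMod q).val * a.val) := by
    rw [← AddChar.zmodChar_apply' hζ.pow_eq_one, Nat.cast_mul, ZMod.natCast_zmod_val,
      ZMod.natCast_zmod_val]
  simp [AddChar.mulShift_apply, hua, AddChar.zmodChar_apply, hz, pow_mul]

-- The embedding attached to `u⁻¹` carries the Fourier coefficients of `F` to those of `F (u * ·)`.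
theorem sum_zmodFourier_comp_units_mul_mul_log {K : Type*} [Field K] [NumberField K]
    [IsCyclotomicExtension {q} ℚ K] {ζ : K} (hζ : IsPrimitiveRoot ζ q) {σ : K →+* ℂ}
    {χ : AddChar (ZMod q) ℂ}
    (hχ : χ = σ.toMonoidHom.compAddChar (AddChar.zmodChar q hζ.pow_eq_one)) {F : ZMod q → ℚ}
    (h : ∑ a, zmodFourier χ (fun b ↦ (F b : ℂ)) a * Complex.log (1 - χ a) = 0) (u : (ZMod q)ˣ) :
    ∑ a, zmodFourier χ (fun b ↦ (F (u * b) : ℂ)) a * Complex.log (1 - χ a) = 0 := by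
  obtain ⟨σ', hσ'⟩ := exists_ringHom_compAddChar_eq_mulShift hζ σ u⁻¹
  set ψ := AddChar.zmodChar q hζ.pow_eq_one
  have hprim : ψ.IsPrimitive := AddChar.zmodChar_primitive_of_primitive_root q hζ
  have hfourier (a : ZMod q) : zmodFourier χ (fun b ↦ (F (u * b) : ℂ)) a =
      σ' (zmodFourier ψ (fun b ↦ (F b : K)) a) := by
    rw [map_zmodFourier, hσ', ← hχ, zmodFourier_mulShift,
      zmodFourier_comp_units_mul χ fun b ↦ (F b : ℂ)]
    simp only [map_ratCast]
  simp only [hfourier]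
  have hexp (a : ZMod q) : Complex.exp (Complex.log (1 - χ a)) =
      σ (if a = 0 then 1 else 1 - ψ a) := by
    split_ifs with ha
    · simp [ha]
    · rw [map_sub, map_one, Complex.exp_log, hχ]
      · rfl
      · exact sub_ne_zero.mpr fun h1 ↦ ha <|
          ((hχ ▸ isPrimitive_compAddChar σ hprim).zmod_char_eq_one_iff q a).mp h1.symm
  refine sum_mul_log_eq_zero_of_sum_mul_log_eq_zero hexp ?_ σ'
  simpa only [map_zmodFourier, map_ratCast, ← hχ] using h

theorem LFunction_one_comp_units_mul_eq_zero {F : ZMod q → ℚ} (hF : ∑ b, (F b : ℂ) = 0)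
    (h : ZMod.LFunction (fun b ↦ (F b : ℂ)) 1 = 0) (u : (ZMod q)ˣ) :
    ZMod.LFunction (fun b : ZMod q ↦ (F (u * b) : ℂ)) 1 = 0 := by
  let K := CyclotomicField q ℚ
  have : IsCyclotomicExtension {q} ℚ K := by
    rw [Subsingleton.elim DivisionRing.toRatAlgebra (CyclotomicField.algebra q ℚ)]
    exact CyclotomicField.isCyclotomicExtension q ℚ
  have hζ := IsCyclotomicExtension.zeta_spec q ℚ K
  obtain ⟨σ⟩ : Nonempty (K →+* ℂ) := inferInstance
  have hprim := isPrimitive_compAddChar σ (AddChar.zmodChar_primitive_of_primitive_root q hζ)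
  have hFu : ∑ b, (F (u * b) : ℂ) = 0 := by
    rw [← hF]
    exact Fintype.sum_equiv (Units.mulLeft u) _ _ fun _ ↦ rfl
  have hq : (q : ℂ)⁻¹ ≠ 0 := inv_ne_zero (NeZero.ne _)
  rw [LFunction_one_eq_sum_log hprim hF] at h
  rw [LFunction_one_eq_sum_log hprim hFu]
  simp only [mul_neg, sum_neg_distrib, neg_eq_zero, mul_eq_zero, hq, false_or] at h ⊢
  exact sum_zmodFourier_comp_units_mul_mul_log hζ rfl h u

end NumberField

end Conjugates

/-! ### Sums over the integers composed of the primes dividing `q` -/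

section FactoredNumbers

variable {q : ℕ}

theorem coprime_of_mem_factoredNumbers {r m : ℕ} (hr : r ∈ Nat.factoredNumbers q.primeFactors)
    (hm : m.Coprime q) : r.Coprime m := by
  by_contra h
  obtain ⟨p, hp, hpr, hpm⟩ := Nat.Prime.not_coprime_iff_dvd.mp h
  have hpq := Nat.dvd_of_mem_primeFactors (Nat.mem_factoredNumbers'.mp hr p hp hpr)
  exact Nat.not_coprime_of_dvd_of_dvd hp.one_lt hpm hpq hm

theorem injective_factoredNumbers_mul_coprime :
    Function.Injective fun c : Nat.factoredNumbers q.primeFactors ×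
      {m : ℕ | m ≠ 0 ∧ m.Coprime q} ↦ (c.1 : ℕ) * c.2 := by
  rintro ⟨⟨r, hr⟩, m, hm0, hm⟩ ⟨⟨r', hr'⟩, m', hm0', hm'⟩ (h : r * m = r' * m')
  obtain rfl : r = r' := Nat.dvd_antisymm
    ((coprime_of_mem_factoredNumbers hr hm').dvd_of_dvd_mul_right (h ▸ dvd_mul_right r m))
    ((coprime_of_mem_factoredNumbers hr' hm).dvd_of_dvd_mul_right (h ▸ dvd_mul_right r' m'))
  obtain rfl : m = m' :=
    Nat.eq_of_mul_eq_mul_left (Nat.pos_of_ne_zero (Nat.ne_zero_of_mem_factoredNumbers hr)) h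
  rfl

theorem mem_factoredNumbers_of_dvd {d : ℕ} (hq : q ≠ 0) (hd : d ∣ q) :
    d ∈ Nat.factoredNumbers q.primeFactors :=
  Nat.mem_factoredNumbers_of_primeFactors_subset (ne_zero_of_dvd_ne_zero hq hd)
    (Nat.primeFactors_mono hd hq)

theorem exists_factoredNumbers_mul_coprime (hq : q ≠ 0) {n : ℕ} (hn : n ≠ 0) :
    ∃ r ∈ Nat.factoredNumbers q.primeFactors, ∃ m, (m ≠ 0 ∧ m.Coprime q) ∧ r * m = n := by
  induction n using Nat.recOnMul with
  | zero => exact absurd rfl hn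
  | one => exact ⟨1, mem_factoredNumbers_of_dvd hq (one_dvd q), 1, by simp, rfl⟩
  | prime p hp =>
    by_cases hpq : p ∣ q
    · exact ⟨p, mem_factoredNumbers_of_dvd hq hpq, 1, by simp, mul_one p⟩
    · exact ⟨1, mem_factoredNumbers_of_dvd hq (one_dvd q), p,
        ⟨hn, hp.coprime_iff_not_dvd.mpr hpq⟩, one_mul p⟩
  | mul a b iha ihb =>
    obtain ⟨r, hr, m, ⟨hm0, hm⟩, rfl⟩ := iha (left_ne_zero_of_mul hn)
    obtain ⟨r', hr', m', ⟨hm0', hm'⟩, rfl⟩ := ihb (right_ne_zero_of_mul hn)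
    exact ⟨r * r', Nat.mul_mem_factoredNumbers hr hr', m * m',
      ⟨mul_ne_zero hm0 hm0', hm.mul_left hm'⟩, mul_mul_mul_comm r r' m m'⟩

theorem prod_primeFactors_one_sub_inv (hq : q ≠ 0) :
    ∏ p ∈ q.primeFactors, (1 - (p : ℝ)⁻¹) = q.totient / q := by
  have h : (q.totient : ℝ) = q * ∏ p ∈ q.primeFactors, (1 - (p : ℝ)⁻¹) := by
    simpa using congrArg (Rat.cast : ℚ → ℝ) (Nat.totient_eq_mul_prod_factors q)
  rw [h, mul_div_cancel_left₀ _ (Nat.cast_ne_zero.mpr hq)]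

theorem hasSum_inv_factoredNumbers (hq : q ≠ 0) :
    HasSum (fun r : Nat.factoredNumbers q.primeFactors ↦ ((r : ℕ) : ℝ)⁻¹) (q / q.totient) := by
  let inv : ℕ →* ℝ :=
    { toFun n := (n : ℝ)⁻¹
      map_one' := by simp
      map_mul' a b := by rw [Nat.cast_mul, mul_inv] }
  have hinv {p : ℕ} (hp : p.Prime) : ‖inv p‖ < 1 := by
    simpa [inv] using inv_lt_one_of_one_lt₀ (Nat.one_lt_cast.mpr hp.one_lt : (1 : ℝ) < p)
  have h := (EulerProduct.summable_and_hasSum_factoredNumbers_prod_filter_prime_geometric hinv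
    q.primeFactors).2
  rw [filter_true_of_mem fun p ↦ Nat.prime_of_mem_primeFactors, prod_inv_distrib] at h
  rwa [← inv_div, ← prod_primeFactors_one_sub_inv hq]

variable {χ : DirichletCharacter ℂ q} {g : ZMod q → ℂ}

theorem term_mul_of_coprime (hg : ∀ (u : (ZMod q)ˣ) x, g (u * x) = χ u * g x) (s : ℂ) (r : ℕ)
    {m : ℕ} (hm : m.Coprime q) :
    LSeries.term (fun n ↦ g n) s (r * m) =
      LSeries.term (fun n ↦ g n) s r * LSeries.term (fun n ↦ χ n) s m := by
  rcases eq_or_ne r 0 with rfl | hr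
  · simp
  rcases eq_or_ne m 0 with rfl | hm0
  · simp
  have hgm : g (r * m : ℕ) = χ m * g r := by
    simpa [mul_comm (r : ZMod q)] using hg (ZMod.unitOfCoprime m hm) r
  rw [LSeries.term_of_ne_zero (mul_ne_zero hr hm0), LSeries.term_of_ne_zero hr,
    LSeries.term_of_ne_zero hm0, hgm, Nat.cast_mul, Complex.natCast_mul_natCast_cpow]
  ring

variable [NeZero q]

/-- The sum `∑ g r / r` over the positive integers `r` all of whose prime factors divide `q`. -/
noncomputable def factoredSum (g : ZMod q → ℂ) : ℂ :=
  ∑' r : Nat.factoredNumbers q.primeFactors, g (r : ℕ) / (r : ℕ)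

theorem summable_norm_factoredNumbers_div (g : ZMod q → ℂ) :
    Summable fun r : Nat.factoredNumbers q.primeFactors ↦ ‖g (r : ℕ) / (r : ℕ)‖ := by
  refine .of_nonneg_of_le (fun _ ↦ norm_nonneg _) (fun r ↦ ?_)
    ((hasSum_inv_factoredNumbers (NeZero.ne q)).summable.mul_left (∑ x, ‖g x‖))
  rw [norm_div, RCLike.norm_natCast, div_eq_mul_inv]
  gcongr
  exact single_le_sum (f := fun x ↦ ‖g x‖) (fun _ _ ↦ norm_nonneg _) (mem_univ _)

theorem tendsto_tsum_factoredNumbers_term (g : ZMod q → ℂ) :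
    Tendsto (fun s : ℝ ↦ ∑' r : Nat.factoredNumbers q.primeFactors,
      LSeries.term (fun n ↦ g n) s r) (𝓝[>] 1) (𝓝 (factoredSum g)) := by
  have hterm (n : ℕ) : LSeries.term (fun n ↦ g n) 1 n = g n / n := by
    rcases eq_or_ne n 0 with rfl | hn
    · simp
    · rw [LSeries.term_of_ne_zero hn, Complex.cpow_one]
  refine tendsto_tsum_of_dominated_convergence (summable_norm_factoredNumbers_div g)
    (fun r ↦ ?_) ?_
  · rw [← hterm, ← Complex.ofReal_one, LSeries_term_ofReal one_ne_zero]
    refine ((tendsto_natCast_rpow_neg r).mul_const (g (r : ℕ))).congr' ?_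
    filter_upwards [self_mem_nhdsWithin] with s (hs : 1 < s)
    exact (LSeries_term_ofReal (zero_lt_one.trans hs).ne' (fun n ↦ g n) r).symm
  · filter_upwards [self_mem_nhdsWithin] with s (hs : 1 < s) r
    rw [← hterm]
    exact LSeries.norm_term_le_of_re_le_re _ (by simpa using hs.le) _

theorem LFunction_eq_tsum_coprime (χ : DirichletCharacter ℂ q) {s : ℂ} (hs : 1 < s.re) :
    χ.LFunction s = ∑' m : {m : ℕ | m ≠ 0 ∧ m.Coprime q}, LSeries.term (fun n ↦ χ n) s m := by
  rw [χ.LFunction_eq_LSeries hs]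
  refine (tsum_subtype_eq_of_support_subset fun m hm ↦ ?_).symm
  refine ⟨fun h0 ↦ hm (by simp [h0]), by_contra fun hcop ↦ hm ?_⟩
  rw [LSeries.term_def, χ.map_nonunit (mt (ZMod.isUnit_iff_coprime m q).mp hcop)]
  simp

theorem LFunction_eq_tsum_factoredNumbers_mul_LFunction
    (hg : ∀ (u : (ZMod q)ˣ) x, g (u * x) = χ u * g x) {s : ℂ} (hs : 1 < s.re) :
    ZMod.LFunction g s =
      (∑' r : Nat.factoredNumbers q.primeFactors, LSeries.term (fun n ↦ g n) s r) *
        χ.LFunction s := by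
  rw [LFunction_eq_tsum_coprime χ hs, tsum_mul_tsum_of_summable_norm
    ((ZMod.LSeriesSummable_of_one_lt_re g hs).norm.subtype _)
    ((ZMod.LSeriesSummable_of_one_lt_re χ hs).norm.subtype _), ZMod.LFunction_eq_LSeries g hs,
    LSeries, ← injective_factoredNumbers_mul_coprime.tsum_eq]
  · exact tsum_congr fun c ↦ term_mul_of_coprime hg s _ c.2.2.2
  · intro n hn
    have hn0 : n ≠ 0 := fun h0 ↦ hn (by simp [h0])
    obtain ⟨r, hr, m, hm, rfl⟩ := exists_factoredNumbers_mul_coprime (NeZero.ne q) hn0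
    exact ⟨(⟨r, hr⟩, ⟨m, hm⟩), rfl⟩

theorem exists_tendsto_inv_LFunction (χ : DirichletCharacter ℂ q) :
    ∃ c, Tendsto (fun s : ℝ ↦ (χ.LFunction s)⁻¹) (𝓝[>] 1) (𝓝 c) := by
  have hone := tendsto_ofReal_nhdsGT_one.mono_right nhdsWithin_le_nhds
  rcases eq_or_ne χ 1 with rfl | hχ
  · have hres : ∏ p ∈ q.primeFactors, (1 - (p : ℂ)⁻¹) ≠ 0 := by
      refine prod_ne_zero_iff.mpr fun p hp ↦ sub_ne_zero.mpr fun h ↦ ?_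
      exact (Nat.prime_of_mem_primeFactors hp).ne_one (by exact_mod_cast inv_eq_one.mp h.symm)
    refine ⟨_, (((DirichletCharacter.LFunctionTrivChar_residue_one (N := q)).comp
      tendsto_ofReal_nhdsGT_one).inv₀ hres |>.mul (hone.sub_const 1)).congr' ?_⟩
    filter_upwards [self_mem_nhdsWithin] with s (hs : 1 < s)
    have hs1 : (s : ℂ) - 1 ≠ 0 := sub_ne_zero.mpr (Complex.ofReal_ne_one.mpr hs.ne')
    rw [Function.comp_apply, mul_inv_rev, inv_mul_cancel_right₀ hs1]
  · have hcont := (χ.differentiableAt_LFunction 1 (.inr hχ)).continuousAt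
    exact ⟨_, (hcont.tendsto.comp hone).inv₀ (DirichletCharacter.LFunction_apply_one_ne_zero hχ)⟩

theorem factoredSum_eq_zero (hg : ∀ (u : (ZMod q)ˣ) x, g (u * x) = χ u * g x)
    (hsum : ∑ b, g b = 0) (h : ZMod.LFunction g 1 = 0) : factoredSum g = 0 := by
  obtain ⟨c, hc⟩ := exists_tendsto_inv_LFunction χ
  have hlim := (tendsto_LFunction_nhdsGT_one hsum).mul hc
  rw [h, zero_mul] at hlim
  refine tendsto_nhds_unique (tendsto_tsum_factoredNumbers_term g) (hlim.congr' ?_)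
  filter_upwards [self_mem_nhdsWithin] with s (hs : 1 < s)
  have hL : χ.LFunction s ≠ 0 := χ.LFunction_ne_zero_of_one_le_re
    (.inr (Complex.ofReal_ne_one.mpr hs.ne')) (by simpa using hs.le)
  rw [LFunction_eq_tsum_factoredNumbers_mul_LFunction hg (by simpa using hs),
    mul_inv_cancel_right₀ hL]

end FactoredNumbers

/-! ### Isotypic components under the units -/

section Isotypic

variable {q : ℕ} [NeZero q]

/-- The `χ`-isotypic component of `F` for the action of the units on functions on `ZMod q`, up to
the factor `1 / φ(q)`. -/
noncomputable def isotypic (χ : DirichletCharacter ℂ q) (F : ZMod q → ℂ) (x : ZMod q) : ℂ :=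
  ∑ u : (ZMod q)ˣ, χ (u⁻¹ : (ZMod q)ˣ) * F (u * x)

theorem isotypic_units_mul (χ : DirichletCharacter ℂ q) (F : ZMod q → ℂ) (u : (ZMod q)ˣ)
    (x : ZMod q) : isotypic χ F (u * x) = χ u * isotypic χ F x := by
  rw [isotypic, isotypic, mul_sum]
  refine Fintype.sum_equiv (Equiv.mulRight u) _ _ fun v ↦ ?_
  rw [Equiv.coe_mulRight, ← mul_assoc (χ u), ← map_mul, ← Units.val_mul, mul_inv_rev,
    mul_inv_cancel_left, Units.val_mul, mul_assoc]

theorem sum_isotypic (χ : DirichletCharacter ℂ q) {F : ZMod q → ℂ} (hF : ∑ b, F b = 0) :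
    ∑ x, isotypic χ F x = 0 := by
  simp only [isotypic]
  rw [sum_comm]
  refine sum_eq_zero fun u _ ↦ ?_
  have hu : ∑ x, F (u * x) = ∑ x, F x := Equiv.sum_comp (Units.mulLeft u) F
  rw [← mul_sum, hu, hF, mul_zero]

theorem LFunction_isotypic (χ : DirichletCharacter ℂ q) (F : ZMod q → ℂ) (s : ℂ) :
    ZMod.LFunction (isotypic χ F) s =
      ∑ u : (ZMod q)ˣ, χ (u⁻¹ : (ZMod q)ˣ) * ZMod.LFunction (fun b : ZMod q ↦ F (u * b)) s := by
  simp only [ZMod.LFunction, isotypic, sum_mul, mul_sum]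
  rw [sum_comm]
  refine sum_congr rfl fun u _ ↦ sum_congr rfl fun b _ ↦ ?_
  ring

theorem sum_characters_isotypic (F : ZMod q → ℂ) (x : ZMod q) :
    ∑ χ, isotypic χ F x = q.totient * F x := by
  simp only [isotypic]
  rw [sum_comm]
  simp only [← sum_mul, DirichletCharacter.sum_characters_eq, Units.val_eq_one, inv_eq_one,
    ite_mul, zero_mul, sum_ite_eq', mem_univ, if_true, Units.val_one, one_mul]

theorem sum_characters_factoredSum_isotypic (F : ZMod q → ℂ) :
    ∑ χ, factoredSum (isotypic χ F) = q.totient * factoredSum F := by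
  simp only [factoredSum]
  rw [← Summable.tsum_finsetSum fun χ _ ↦
    (summable_norm_factoredNumbers_div (isotypic χ F)).of_norm, ← tsum_mul_left]
  refine tsum_congr fun r ↦ ?_
  rw [← sum_div, sum_characters_isotypic, mul_div_assoc]

theorem factoredSum_eq_zero_of_hasHarmonicSum {F : ZMod q → ℚ}
    (h : HasHarmonicSum (fun n ↦ (F n : ℂ)) 0) : factoredSum (fun b ↦ (F b : ℂ)) = 0 := by
  have hsum := HasHarmonicSum.sum_eq_zero (F := fun b ↦ (F b : ℂ)) h
  have hone := HasHarmonicSum.eq_LFunction_one (F := fun b ↦ (F b : ℂ)) h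
  have hisotypic (χ : DirichletCharacter ℂ q) :
      factoredSum (isotypic χ fun b ↦ (F b : ℂ)) = 0 := by
    refine factoredSum_eq_zero (isotypic_units_mul χ _) (sum_isotypic χ hsum) ?_
    rw [LFunction_isotypic]
    refine sum_eq_zero fun u _ ↦ ?_
    rw [LFunction_one_comp_units_mul_eq_zero hsum hone.symm u, mul_zero]
  have htotient : (q.totient : ℂ) ≠ 0 :=
    Nat.cast_ne_zero.mpr (Nat.totient_pos.mpr (NeZero.pos q)).ne'
  refine (mul_eq_zero.mp ?_).resolve_left htotient
  rw [← sum_characters_factoredSum_isotypic, sum_eq_zero fun χ _ ↦ hisotypic χ]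

end Isotypic

/-! ### Erdősian functions -/

section Erdosian

theorem two_mul_norm_le_of_hasSum_zero {ι E : Type*} [NormedAddCommGroup E] {a : ι → E} {S : ℝ}
    (ha : HasSum a 0) (hS : HasSum (fun i ↦ ‖a i‖) S) (i : ι) : 2 * ‖a i‖ ≤ S := by
  classical
  have h := (hasSum_ite_sub_hasSum ha i).norm_le_of_bounded (hasSum_ite_sub_hasSum hS i)
    fun j ↦ by split_ifs <;> simp
  rw [zero_sub, norm_neg] at h
  linarith

theorem hasHarmonicSum_of_tendsto_sum_Icc {a : ℕ → ℝ} {b : ℕ → ℂ} {ℓ : ℝ}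
    (hab : ∀ n, 1 ≤ n → b n = a n)
    (h : Tendsto (fun N ↦ ∑ n ∈ Icc 1 N, a n / n) atTop (𝓝 ℓ)) : HasHarmonicSum b ℓ := by
  refine (tendsto_add_atTop_iff_nat 1).mp
    (((Complex.continuous_ofReal.tendsto ℓ).comp h).congr fun N ↦ ?_)
  have hsub : Icc 1 N ⊆ range (N + 1) := fun n hn ↦
    mem_range.mpr (Nat.lt_succ_of_le (mem_Icc.mp hn).2)
  rw [Function.comp_apply, Complex.ofReal_sum, ← sum_subset hsub]
  · refine sum_congr rfl fun n hn ↦ ?_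
    rw [hab n (mem_Icc.mp hn).1, Complex.ofReal_div, Complex.ofReal_natCast]
  · intro n hn hn'
    obtain rfl : n = 0 := by
      simp only [mem_range, mem_Icc] at hn hn'
      omega
    simp

variable {q : ℕ} {f : ℕ → ℤ}

theorem IsErdosian.apply_add_mul (hf : IsErdosian q f) {n : ℕ} (hn : 1 ≤ n) (k : ℕ) :
    f (n + k * q) = f n := by
  induction k with
  | zero => rw [zero_mul, add_zero]
  | succ k ih => rw [Nat.succ_mul, ← add_assoc, hf.1 _ (by omega), ih]

theorem IsErdosian.exists_zmod [NeZero q] (hf : IsErdosian q f) (hq : 1 < q) :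
    ∃ F : ZMod q → ℚ, F 0 = 0 ∧ |F 1| = 1 ∧ (∀ b, |F b| ≤ 1) ∧
      ∀ n : ℕ, 1 ≤ n → F n = f n := by
  have habs {n : ℕ} (hn : 1 ≤ n) (hqn : ¬ q ∣ n) : |(f n : ℚ)| = 1 := by
    rcases hf.2.1 n hn hqn with h | h <;> simp [h]
  have hpos (b : ZMod q) : 1 ≤ b.val + q := by omega
  have hF (n : ℕ) (hn : 1 ≤ n) : f ((n : ZMod q).val + q) = f n := by
    rw [← hf.apply_add_mul (hpos n) (n / q), ZMod.val_natCast, add_right_comm,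
      Nat.mod_add_div', hf.1 n hn]
  -- Shifted by `q`, as nothing is assumed about `f 0`.
  refine ⟨fun b ↦ f (b.val + q), ?_, ?_, fun b ↦ ?_, fun n hn ↦
    congrArg Int.cast (hF n hn)⟩
  · simp [hf.2.2 q hq.le dvd_rfl]
  · have h1 := hF 1 le_rfl
    rw [Nat.cast_one] at h1
    simpa only [h1] using habs le_rfl (Nat.dvd_one.not.mpr hq.ne')
  · by_cases hb : q ∣ b.val + q
    · simp [hf.2.2 _ (hpos b) hb]
    · exact (habs (hpos b) hb).le

theorem two_mul_totient_lt_of_hasHarmonicSum [NeZero q] {F : ZMod q → ℚ} (h0 : F 0 = 0)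
    (h1 : |F 1| = 1) (hF : ∀ b, |F b| ≤ 1) (h : HasHarmonicSum (fun n ↦ (F n : ℂ)) 0) :
    2 * q.totient < q := by
  have hq : q ≠ 0 := NeZero.ne q
  let one : Nat.factoredNumbers q.primeFactors := ⟨1, mem_factoredNumbers_of_dvd hq (one_dvd q)⟩
  let self : Nat.factoredNumbers q.primeFactors := ⟨q, mem_factoredNumbers_of_dvd hq dvd_rfl⟩
  let a : Nat.factoredNumbers q.primeFactors → ℂ := fun r ↦ (F (r : ℕ) : ℂ) / (r : ℕ)
  have hnorm : Summable fun r ↦ ‖a r‖ :=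
    summable_norm_factoredNumbers_div fun b : ZMod q ↦ (F b : ℂ)
  have ha : HasSum a 0 := by
    rw [← factoredSum_eq_zero_of_hasHarmonicSum h]
    exact hnorm.of_norm.hasSum
  have hle (r : Nat.factoredNumbers q.primeFactors) : ‖a r‖ ≤ ((r : ℕ) : ℝ)⁻¹ := by
    rw [norm_div, Complex.norm_ratCast, RCLike.norm_natCast, div_eq_mul_inv]
    exact mul_le_of_le_one_left (by positivity) (by exact_mod_cast hF _)
  have hone : ‖a one‖ = 1 := by
    have : |(F 1 : ℝ)| = 1 := by exact_mod_cast h1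
    simp [a, one, Complex.norm_ratCast, this]
  have hself : ‖a self‖ < ((self : ℕ) : ℝ)⁻¹ := by
    simpa [a, self, h0] using NeZero.pos q
  have hlt : (2 : ℝ) < q / q.totient := calc
    (2 : ℝ) = 2 * ‖a one‖ := by rw [hone, mul_one]
    _ ≤ ∑' r, ‖a r‖ := two_mul_norm_le_of_hasSum_zero ha hnorm.hasSum one
    _ < q / q.totient := hasSum_lt hle hself hnorm.hasSum (hasSum_inv_factoredNumbers hq)
  rw [lt_div_iff₀ (Nat.cast_pos.mpr (Nat.totient_pos.mpr (NeZero.pos q)))] at hlt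
  exact_mod_cast hlt

theorem erdos_true_squarefree_minFac_gt_two_pow_general (q : ℕ) (hq : 1 < q)
    (hφ : q ≤ 2 * q.totient) : ErdosConjectureHolds q := by
  rintro ⟨f, hf, hlim⟩
  have : NeZero q := ⟨by omega⟩
  obtain ⟨F, h0, h1, hle, hFf⟩ := hf.exists_zmod hq
  refine hφ.not_gt (two_mul_totient_lt_of_hasHarmonicSum h0 h1 hle ?_)
  rw [← Complex.ofReal_zero]
  exact hasHarmonicSum_of_tendsto_sum_Icc (fun n hn ↦ by simp [hFf n hn]) hlim

end Erdosian

theorem le_two_mul_totient_of_two_pow_lt_minFac {q : ℕ} (hq : q ≠ 0)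
    (h : 2 ^ q.primeFactors.card < q.minFac) : q ≤ 2 * q.totient := by
  set k := q.primeFactors.card
  have hk : (2 : ℝ) * k ≤ 2 ^ k := by exact_mod_cast Nat.mul_le_pow (by norm_num : 2 ≠ 1) k
  have hpow : (0 : ℝ) < 2 ^ k := by positivity
  have hlower {p : ℕ} (hp : p ∈ q.primeFactors) : 1 - ((2 : ℝ) ^ k)⁻¹ ≤ 1 - (p : ℝ)⁻¹ := by
    have hkp : 2 ^ k ≤ p := h.le.trans (Nat.minFac_le_of_dvd
      (Nat.prime_of_mem_primeFactors hp).two_le (Nat.dvd_of_mem_primeFactors hp))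
    gcongr
    exact_mod_cast hkp
  have hinv : ((2 : ℝ) ^ k)⁻¹ ≤ 1 := inv_le_one_of_one_le₀ (one_le_pow₀ one_le_two)
  have hhalf : (1 : ℝ) / 2 ≤ q.totient / q := calc
    (1 : ℝ) / 2 ≤ 1 + k * -((2 : ℝ) ^ k)⁻¹ := by
        rw [mul_neg, ← div_eq_mul_inv]
        linarith [(div_le_div_iff₀ hpow two_pos).mpr (by linarith : (k : ℝ) * 2 ≤ 1 * 2 ^ k)]
    _ ≤ (1 + -((2 : ℝ) ^ k)⁻¹) ^ k := one_add_mul_le_pow (by linarith) k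
    _ = ∏ p ∈ q.primeFactors, (1 - ((2 : ℝ) ^ k)⁻¹) := by rw [prod_const, sub_eq_add_neg]
    _ ≤ ∏ p ∈ q.primeFactors, (1 - (p : ℝ)⁻¹) :=
        prod_le_prod (fun p _ ↦ sub_nonneg.mpr hinv) fun p ↦ hlower
    _ = q.totient / q := prod_primeFactors_one_sub_inv hq
  rw [div_le_div_iff₀ two_pos (by positivity)] at hhalf
  exact_mod_cast (by linarith : (q : ℝ) ≤ 2 * q.totient)

theorem erdos_true_squarefree_minFac_gt_two_pow (q : ℕ) (hq : 1 < q) (hodd : Odd q)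
    (hsf : Squarefree q) (k : ℕ) (hk : q.primeFactors.card = k)
    (h : 2 ^ k < q.minFac) :
    ErdosConjectureHolds q := by
  subst hk
  exact erdos_true_squarefree_minFac_gt_two_pow_general q hq
    (le_two_mul_totient_of_two_pow_lt_minFac (by omega) h)
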